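/- Assume additionally that c_j ≠ c for all 1 < j < l. Set r := #{i : c_i > c} and s := (Σ_{i : c_i ≤ c} c_i) − 2c. For a point ξ : P → ℂ let X(ξ) denote the complex n×n matrix whose (a,b) entry is ξ(a,b) for (a,b) ∈ P and 0 otherwise. Then the vanishing ideal in R of the set V := { ξ : P → ℂ | rank(X(ξ)^{r+1}) = s + c − 1 } is the principal ideal generated by the Benlolo–Sanderson element f. (This is the Benlolo–Sanderson conjecture: the ideal of definition of the hypersurface orbital variety closure in the nilradical m is generated by f.) -/

import Mathlib

open Finset MvPolynomial

noncomputable section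

/-- Sum of the first `j` block sizes (blocks are 1-indexed). -/
def blkSum (c : ℕ → ℕ) (j : ℕ) : ℕ := ∑ i ∈ Finset.Icc 1 j, c i

/-- Block index of `a ∈ {1,…,n}`: the least `j` with `a ≤ c 1 + ⋯ + c j`. -/
def blk (c : ℕ → ℕ) (a : ℕ) : ℕ := sInf {j | a ≤ blkSum c j}

/-- The index set `P` of positions of the nilradical `m`: pairs `(a, b)` of indices
(0-indexed here, representing the 1-indexed pair `(a+1, b+1)`) with `b < a` and
`blk (b+1) < blk (a+1)`. -/
abbrev Pos (c : ℕ → ℕ) (n : ℕ) : Type :=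
  {p : Fin n × Fin n // p.2 < p.1 ∧ blk c (p.2.1 + 1) < blk c (p.1.1 + 1)}

/-- The generic matrix `𝒳` of the nilradical `m`. -/
def genX (c : ℕ → ℕ) (n : ℕ) : Matrix (Fin n) (Fin n) (MvPolynomial (Pos c n) ℂ) :=
  Matrix.of fun a b =>
    if h : b < a ∧ blk c (b.1 + 1) < blk c (a.1 + 1) then X (⟨(a, b), h⟩ : Pos c n) else 0

/-- The matrix `M(t)`: the `(n-c) × (n-c)` submatrix of `𝒳 + t · Id` consisting of
rows `c+1, …, n` and columns `1, …, n-c`, viewed over `R[t]`.  Here `m = n - c`. -/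
def Mmat (c : ℕ → ℕ) (n m : ℕ) (h : m + c 1 = n) :
    Matrix (Fin m) (Fin m) (Polynomial (MvPolynomial (Pos c n) ℂ)) :=
  Matrix.of fun i j =>
    Polynomial.C (genX c n (Fin.cast h (i.addNat (c 1)))
        (Fin.castLE (le_trans (Nat.le_add_right m (c 1)) (le_of_eq h)) j))
      + if (Fin.cast h (i.addNat (c 1)) : Fin n)
            = Fin.castLE (le_trans (Nat.le_add_right m (c 1)) (le_of_eq h)) j
        then Polynomial.X else 0

/-- `d := Σᵢ max (cᵢ - c, 0)` (truncated subtraction). -/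
def dBS (c : ℕ → ℕ) (l : ℕ) : ℕ := ∑ i ∈ Finset.Icc 1 l, (c i - c 1)

/-- The Benlolo–Sanderson element: the coefficient of `t^d` in `det M(t)`. -/
def BSf (c : ℕ → ℕ) (l n m : ℕ) (h : m + c 1 = n) : MvPolynomial (Pos c n) ℂ :=
  ((Mmat c n m h).det).coeff (dBS c l)

/-- The point of the nilradical determined by `ξ : P → ℂ`. -/
def Xpt (c : ℕ → ℕ) (n : ℕ) (ξ : Pos c n → ℂ) : Matrix (Fin n) (Fin n) ℂ :=
  Matrix.of fun a b =>
    if h : b < a ∧ blk c (b.1 + 1) < blk c (a.1 + 1) then ξ ⟨(a, b), h⟩ else 0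

set_option linter.unusedSectionVars false

structure BD (n m l : ℕ) (c : ℕ → ℕ) (β : Fin n → ℕ) : Prop where
  hl : 2 ≤ l
  pos : ∀ i ∈ Finset.Icc 1 l, 0 < c i
  hcl : c l = c 1
  hm : m + c 1 = n
  mono : Monotone β
  rng : ∀ a, β a ∈ Finset.Icc 1 l
  card : ∀ i ∈ Finset.Icc 1 l, (univ.filter (fun a => β a = i)).card = c i
  first : ∀ a, β a = 1 ↔ a.1 < c 1
  last : ∀ a, β a = l ↔ m ≤ a.1

lemma count_block {n : ℕ} (β : Fin n → ℕ) (σ : Equiv.Perm (Fin n)) (J : Finset (Fin n))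
    (hσ : ∀ j ∈ J, σ j = j ∨ β j < β (σ j)) (i : ℕ) :
    (univ.filter (fun a => β a = i)).card ≤
      (J.filter (fun j => σ j = j ∧ β j = i)).card + (Jᶜ.filter (fun j => i ≤ β j)).card := by
  classical
  set A := univ.filter (fun j => i < β j)
  set B := univ.filter (fun j => i < β (σ j))
  have hAB : A.card = B.card := by
    symm
    apply Finset.card_bij (fun j _ => σ j)
    · intro a ha; simpa [A, B] using ha
    · intro a _ b _ h; exact σ.injective h
    · intro b hb; exact ⟨σ.symm b, by simpa [A, B] using hb, by simp⟩
  have h1 : (B \ A).card = (A \ B).card := Finset.card_sdiff_comm hAB.symm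
  have h2 : A \ B ⊆ Jᶜ.filter (fun j => i < β j) := by
    intro j hj
    simp [A, B] at hj ⊢
    refine ⟨fun hJ => ?_, hj.1⟩
    rcases hσ j hJ with h | h
    · rw [h] at hj; omega
    · omega
  have h3 : J.filter (fun j => σ j ≠ j ∧ β j = i) ⊆ B \ A := by
    intro j hj
    simp [A, B] at hj ⊢
    rcases hσ j hj.1 with h | h
    · exact absurd h hj.2.1
    · omega
  have h4 : univ.filter (fun a => β a = i) ⊆
      J.filter (fun j => σ j = j ∧ β j = i) ∪ (J.filter (fun j => σ j ≠ j ∧ β j = i)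
        ∪ Jᶜ.filter (fun j => β j = i)) := by
    intro j hj
    simp at hj ⊢
    tauto
  have h5 : Jᶜ.filter (fun j => i ≤ β j) =
      Jᶜ.filter (fun j => i < β j) ∪ Jᶜ.filter (fun j => β j = i) := by
    ext j; simp; constructor
    · rintro ⟨a, b⟩; rcases b.lt_or_eq with h | h
      · left; exact ⟨a, h⟩
      · right; exact ⟨a, h.symm⟩
    · rintro (⟨a, b⟩ | ⟨a, b⟩)
      · exact ⟨a, b.le⟩
      · exact ⟨a, b.ge⟩
  have h6 : Disjoint (Jᶜ.filter (fun j => i < β j)) (Jᶜ.filter (fun j => β j = i)) := by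
    rw [Finset.disjoint_left]; intro j; simp; omega
  rw [h5, Finset.card_union_of_disjoint h6]
  have := (Finset.card_le_card h4).trans (Finset.card_union_le _ _)
  have := Finset.card_union_le (J.filter (fun j => σ j ≠ j ∧ β j = i)) (Jᶜ.filter (fun j => β j = i))
  have := Finset.card_le_card h2
  have := Finset.card_le_card h3
  omega

namespace BD
variable {n m l : ℕ} {c : ℕ → ℕ} {β : Fin n → ℕ} (h : BD n m l c β)
include h

lemma fix_sum (σ : Equiv.Perm (Fin n)) (J : Finset (Fin n)) :
    (J.filter (fun j => σ j = j)).card =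
      ∑ i ∈ Finset.Icc 1 l, (J.filter (fun j => σ j = j ∧ β j = i)).card := by
  rw [Finset.card_eq_sum_card_fiberwise (f := β) (t := Finset.Icc 1 l) (fun a _ => h.rng a)]
  refine Finset.sum_congr rfl fun i _ => ?_
  rw [Finset.filter_filter]

lemma count (σ : Equiv.Perm (Fin n)) (J : Finset (Fin n))
    (hσ : ∀ j ∈ J, σ j = j ∨ β j < β (σ j)) (hJ : Jᶜ.card ≤ c 1) :
    dBS c l ≤ (J.filter (fun j => σ j = j)).card := by
  rw [h.fix_sum, dBS]
  refine Finset.sum_le_sum fun i hi => ?_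
  have := count_block β σ J hσ i
  rw [h.card i hi] at this
  have h2 := Finset.card_le_card (Finset.filter_subset (fun j => i ≤ β j) Jᶜ)
  omega

lemma count_eq (σ : Equiv.Perm (Fin n)) (J : Finset (Fin n))
    (hσ : ∀ j ∈ J, σ j = j ∨ β j < β (σ j)) (hJ : Jᶜ.card ≤ c 1)
    (he : (J.filter (fun j => σ j = j)).card ≤ dBS c l) :
    Jᶜ = univ.filter (fun j => β j = l) ∧ ∀ j, β (σ j) = 1 → j ∈ Jᶜ := by
  have hb : ∀ i ∈ Finset.Icc 1 l, c i - c 1 = (J.filter (fun j => σ j = j ∧ β j = i)).card := by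
    rw [h.fix_sum, dBS] at he
    have hle : ∀ i ∈ Finset.Icc 1 l, c i - c 1 ≤
        (J.filter (fun j => σ j = j ∧ β j = i)).card := by
      intro i hi
      have := count_block β σ J hσ i
      rw [h.card i hi] at this
      have h2 := Finset.card_le_card (Finset.filter_subset (fun j => i ≤ β j) Jᶜ)
      omega
    exact (Finset.sum_eq_sum_iff_of_le hle).1 (le_antisymm (Finset.sum_le_sum hle) he)
  have hl := h.hl
  have m1 : 1 ∈ Finset.Icc 1 l := by simp; omega
  have ml : l ∈ Finset.Icc 1 l := by simp; omega
  constructor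
  · have h1 := hb l ml
    have := count_block β σ J hσ l
    rw [h.card l ml, ← h1, h.hcl, Nat.sub_self, Nat.zero_add] at this
    have e1 : Jᶜ.filter (fun j => l ≤ β j) = Jᶜ :=
      Finset.eq_of_subset_of_card_le (Finset.filter_subset _ _) (by omega)
    refine Finset.eq_of_subset_of_card_le ?_ ?_
    · rw [← e1]; intro j; simp
      intro _ h2
      have := h.rng j
      simp at this; omega
    · rw [h.card l ml, h.hcl, ← e1]; exact this
  · intro j hj
    by_contra hcon
    have hjJ : j ∈ J := by simpa using hcon
    have h1 := hb 1 m1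
    rw [Nat.sub_self, eq_comm, Finset.card_eq_zero] at h1
    rcases hσ j hjJ with h2 | h2
    · have : j ∈ J.filter (fun j => σ j = j ∧ β j = 1) := by
        simp; exact ⟨hjJ, h2, by rw [← h2]; exact hj⟩
      rw [h1] at this; simp at this
    · have := h.rng j
      simp at this; omega

lemma c1_le_m : c 1 ≤ m := by
  have hl := h.hl
  have hp := h.pos l (by simp; omega)
  rw [h.hcl] at hp
  by_contra hcon
  have hm := h.hm
  have h1 := (h.first ⟨m, by omega⟩).2 (by simp; omega)
  have h2 := (h.last ⟨m, by omega⟩).2 (by simp)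
  omega

lemma n_eq : n = ∑ i ∈ Finset.Icc 1 l, c i := by
  have : (univ : Finset (Fin n)).card = _ :=
    Finset.card_eq_sum_card_fiberwise (f := β) (t := Finset.Icc 1 l) (fun a _ => h.rng a)
  rw [Finset.card_fin] at this
  rw [this]
  exact Finset.sum_congr rfl fun i hi => h.card i hi

lemma n_eq' {r s : ℕ} (hr : r = ((Finset.Icc 1 l).filter fun i => c 1 < c i).card)
    (hs : s = (∑ i ∈ (Finset.Icc 1 l).filter (fun i => c i ≤ c 1), c i) - 2 * c 1) :
    (∑ i ∈ (Finset.Icc 1 l).filter (fun i => c i ≤ c 1), c i) = s + 2 * c 1 ∧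
    n = s + 2 * c 1 + dBS c l + r * c 1 := by
  have hl := h.hl
  have h1 : 2 * c 1 ≤ ∑ i ∈ (Finset.Icc 1 l).filter (fun i => c i ≤ c 1), c i := by
    have : ({1, l} : Finset ℕ) ⊆ (Finset.Icc 1 l).filter (fun i => c i ≤ c 1) := by
      intro i; simp; rintro (rfl | rfl)
      · simp; omega
      · simp [h.hcl]; omega
    refine le_trans ?_ (Finset.sum_le_sum_of_subset this)
    rw [Finset.sum_pair (by omega), h.hcl]; omega
  have h2 : dBS c l + r * c 1 = ∑ i ∈ (Finset.Icc 1 l).filter (fun i => c 1 < c i), c i := by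
    have : dBS c l = ∑ i ∈ (Finset.Icc 1 l).filter (fun i => c 1 < c i), (c i - c 1) := by
      rw [dBS, Finset.sum_filter]
      refine Finset.sum_congr rfl fun i _ => ?_
      split_ifs <;> omega
    rw [this, hr, ← smul_eq_mul, ← Finset.sum_const, ← Finset.sum_add_distrib]
    refine Finset.sum_congr rfl fun i hi => ?_
    simp at hi; omega
  refine ⟨by omega, ?_⟩
  have h3 := h.n_eq
  rw [← Finset.sum_filter_add_sum_filter_not _ (fun i => c i ≤ c 1)] at h3
  simp only [not_le] at h3
  omega

end BD

/-- `X + t`. -/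
def Pm {n : ℕ} (A : Matrix (Fin n) (Fin n) ℂ) : Matrix (Fin n) (Fin n) (Polynomial ℂ) :=
  Matrix.of fun i j => Polynomial.C (A i j) + if i = j then Polynomial.X else 0

lemma Pm_charpoly {n : ℕ} (A : Matrix (Fin n) (Fin n) ℂ) : (Pm A).det = (-A).charpoly := by
  rw [Matrix.charpoly]
  congr 1
  ext1 i j
  by_cases hij : i = j
  · subst hij; simp [Pm, Matrix.charmatrix_apply_eq, add_comm]
  · simp [Pm, hij]

/-- columns in `J` from `Pm A`, the others constant from `Y`. -/
def Nm {n : ℕ} (A Y : Matrix (Fin n) (Fin n) ℂ) (J : Finset (Fin n)) :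
    Matrix (Fin n) (Fin n) (Polynomial ℂ) :=
  Matrix.of fun i j => if j ∈ J then Pm A i j else Polynomial.C (Y i j)

def Nil {n : ℕ} (β : Fin n → ℕ) (A : Matrix (Fin n) (Fin n) ℂ) : Prop :=
  ∀ i j, ¬ (β j < β i) → A i j = 0

def rowE {n m k : ℕ} (h : m + k = n) (i : Fin m) : Fin n := Fin.cast h (i.addNat k)
def colE {n m k : ℕ} (h : m + k = n) (i : Fin m) : Fin n :=
  Fin.castLE (le_trans (Nat.le_add_right m k) (le_of_eq h)) i

def fpt {n m : ℕ} (c : ℕ → ℕ) (l : ℕ) (h : m + c 1 = n) (A : Matrix (Fin n) (Fin n) ℂ) : ℂ :=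
  (((Pm A).submatrix (rowE h) (colE h)).det).coeff (dBS c l)

lemma term_zero {n : ℕ} {β : Fin n → ℕ} {A : Matrix (Fin n) (Fin n) ℂ} (hA : Nil β A)
    (Y : Matrix (Fin n) (Fin n) ℂ) (J : Finset (Fin n)) (σ : Equiv.Perm (Fin n))
    (hσ : ¬ ∀ j ∈ J, σ j = j ∨ β j < β (σ j)) : ∏ j, Nm A Y J (σ j) j = 0 := by
  push Not at hσ
  obtain ⟨j, hj, h1, h2⟩ := hσ
  apply Finset.prod_eq_zero (Finset.mem_univ j)
  simp [Nm, Pm, hj, h1, hA (σ j) j (by omega)]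

lemma term_dvd {n : ℕ} {β : Fin n → ℕ} {A : Matrix (Fin n) (Fin n) ℂ} (hA : Nil β A)
    (Y : Matrix (Fin n) (Fin n) ℂ) (J : Finset (Fin n)) (σ : Equiv.Perm (Fin n)) :
    (Polynomial.X : Polynomial ℂ) ^ (J.filter (fun j => σ j = j)).card ∣
      ∏ j, Nm A Y J (σ j) j := by
  rw [← Finset.prod_const]
  refine dvd_trans ?_ (Finset.prod_dvd_prod_of_subset _ _ _
    (Finset.subset_univ (J.filter (fun j => σ j = j))))
  refine Finset.prod_dvd_prod_of_dvd _ _ ?_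
  intro j hj
  simp at hj
  simp [Nm, Pm, hj.1, hj.2, hA j j (by omega)]

namespace BD
variable {n m l : ℕ} {c : ℕ → ℕ} {β : Fin n → ℕ} (h : BD n m l c β)
include h

lemma Nm_dvd {A : Matrix (Fin n) (Fin n) ℂ} (hA : Nil β A)
    (Y : Matrix (Fin n) (Fin n) ℂ) (J : Finset (Fin n)) (hJ : Jᶜ.card ≤ c 1) :
    (Polynomial.X : Polynomial ℂ) ^ dBS c l ∣ (Nm A Y J).det := by
  rw [Matrix.det_apply]
  refine Finset.dvd_sum fun σ _ => ?_
  by_cases hσ : ∀ j ∈ J, σ j = j ∨ β j < β (σ j)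
  · refine (Dvd.dvd.trans (pow_dvd_pow _ (h.count σ J hσ hJ)) (term_dvd hA Y J σ)).trans ?_
    rw [Units.smul_def, zsmul_eq_mul]
    exact Dvd.intro_left _ rfl
  · rw [term_zero hA Y J σ hσ]; simp

lemma Nm_dvd' {A : Matrix (Fin n) (Fin n) ℂ} (hA : Nil β A)
    (Y : Matrix (Fin n) (Fin n) ℂ) (J : Finset (Fin n)) (hJ : Jᶜ.card ≤ c 1)
    (hJ' : Jᶜ ≠ univ.filter (fun j => β j = l)) :
    (Polynomial.X : Polynomial ℂ) ^ (dBS c l + 1) ∣ (Nm A Y J).det := by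
  rw [Matrix.det_apply]
  refine Finset.dvd_sum fun σ _ => ?_
  by_cases hσ : ∀ j ∈ J, σ j = j ∨ β j < β (σ j)
  · have : dBS c l + 1 ≤ (J.filter (fun j => σ j = j)).card := by
      by_contra hc
      exact hJ' (h.count_eq σ J hσ hJ (by omega)).1
    refine (Dvd.dvd.trans (pow_dvd_pow _ this) (term_dvd hA Y J σ)).trans ?_
    rw [Units.smul_def, zsmul_eq_mul]
    exact Dvd.intro_left _ rfl
  · rw [term_zero hA Y J σ hσ]; simp

lemma Nm_congr {A : Matrix (Fin n) (Fin n) ℂ} (hA : Nil β A)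
    (Y Y' : Matrix (Fin n) (Fin n) ℂ) (hY : ∀ i j, β i = 1 → Y i j = Y' i j) :
    (Nm A Y (univ.filter (fun j => β j = l))ᶜ).det.coeff (dBS c l) =
    (Nm A Y' (univ.filter (fun j => β j = l))ᶜ).det.coeff (dBS c l) := by
  have hl := h.hl
  rw [Matrix.det_apply, Matrix.det_apply, Polynomial.finsetSum_coeff, Polynomial.finsetSum_coeff]
  refine Finset.sum_congr rfl fun σ _ => ?_
  rw [Polynomial.coeff_smul, Polynomial.coeff_smul]
  congr 1
  set J := (univ.filter (fun j => β j = l))ᶜ with hJdef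
  have hJc : Jᶜ = univ.filter (fun j => β j = l) := by simp [J]
  have hJ : Jᶜ.card = c 1 := by rw [hJc, h.card l (by simp; omega), h.hcl]
  by_cases hσ : ∀ j ∈ J, σ j = j ∨ β j < β (σ j)
  · by_cases hF : dBS c l + 1 ≤ (J.filter (fun j => σ j = j)).card
    · rw [Polynomial.X_pow_dvd_iff.1 (term_dvd hA Y J σ) _ (by omega),
        Polynomial.X_pow_dvd_iff.1 (term_dvd hA Y' J σ) _ (by omega)]
    · have h1 := (h.count_eq σ J hσ hJ.le (by omega)).2
      -- σ maps Jᶜ to block one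
      have h2 : (univ.filter (fun j => β j = 1)).image σ.symm = Jᶜ := by
        apply Finset.eq_of_subset_of_card_le
        · intro j hj
          simp only [Finset.mem_image, Finset.mem_filter, Finset.mem_univ, true_and] at hj
          obtain ⟨a, ha, rfl⟩ := hj
          exact h1 _ (by simpa using ha)
        · rw [Finset.card_image_of_injective _ σ.symm.injective, hJ, h.card 1 (by simp; omega)]
      congr 1
      refine Finset.prod_congr rfl fun j _ => ?_
      by_cases hj : j ∈ J
      · simp [Nm, hj]
      · simp only [Nm, Matrix.of_apply, if_neg hj]
        rw [hY]
        have : j ∈ Jᶜ := by simpa using hj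
        rw [← h2] at this
        simp only [Finset.mem_image, Finset.mem_filter, Finset.mem_univ, true_and] at this
        obtain ⟨a, ha, rfl⟩ := this
        simpa using ha
  · rw [term_zero hA Y J σ hσ, term_zero hA Y' J σ hσ]

def eR   : Fin m ⊕ Fin (c 1) ≃ Fin n :=
  (Equiv.sumComm _ _).trans (finSumFinEquiv.trans (finCongr (by rw [add_comm]; exact h.hm)))

def eC   : Fin m ⊕ Fin (c 1) ≃ Fin n :=
  finSumFinEquiv.trans (finCongr h.hm)

/-- The corner block of a matrix. -/
def corner (D : Matrix (Fin n) (Fin n) ℂ) : Matrix (Fin (c 1)) (Fin (c 1)) ℂ :=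
  D.submatrix (fun i => h.eR (Sum.inr i)) (fun i => h.eC (Sum.inr i))

lemma Nm_special {A : Matrix (Fin n) (Fin n) ℂ} (hA : Nil β A)
    (Y : Matrix (Fin n) (Fin n) ℂ) :
    ((Equiv.Perm.sign (h.eC.symm.trans h.eR) : ℤ) : ℂ) *
    (Nm A Y (univ.filter (fun j => β j = l))ᶜ).det.coeff (dBS c l) =
     fpt c l h.hm A * (h.corner Y).det := by
  classical
  set Y' : Matrix (Fin n) (Fin n) ℂ := Matrix.of fun i j => if β i = 1 then Y i j else 0 with hY'
  rw [h.Nm_congr hA Y Y' (by intro i j hi; simp [Y', hi])]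
  set N := Nm A Y' (univ.filter (fun j => β j = l))ᶜ with hN
  have e1 : N.submatrix h.eR h.eC = Matrix.fromBlocks
      ((Pm A).submatrix (rowE h.hm) (colE h.hm)) 0
      (N.submatrix (fun i => h.eR (Sum.inr i)) (fun i => h.eC (Sum.inl i)))
      ((h.corner Y).map Polynomial.C) := by
    ext1 i j
    rcases i with i | i <;> rcases j with j | j
    · have : β (h.eC (Sum.inl j)) ≠ l := by
        rw [Ne, h.last]; simp [eC]
      simp only [Matrix.submatrix_apply, Matrix.fromBlocks_apply₁₁, N, Nm, Matrix.of_apply]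
      rw [if_pos (by simpa using this)]
      congr 1
      · ext; simp [eR, rowE]; omega
    · have h1 : β (h.eC (Sum.inr j)) = l := by
        rw [h.last]; simp [eC]
      have h2 : β (h.eR (Sum.inl i)) ≠ 1 := by
        rw [Ne, h.first]; simp [eR]
      simp [N, Nm, h1, Y', h2]
    · simp
    · have h1 : β (h.eC (Sum.inr j)) = l := by
        rw [h.last]; simp [eC]
      have h2 : β (h.eR (Sum.inr i)) = 1 := by
        rw [h.first]; simp [eR]
      simp [N, Nm, h1, Y', h2, corner]
  have e2 : (N.submatrix h.eR h.eC).det =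
      ((Equiv.Perm.sign (h.eC.symm.trans h.eR) : ℤ) : Polynomial ℂ) * N.det := by
    have : N.submatrix h.eR h.eC =
        (N.submatrix (h.eC.symm.trans h.eR) id).submatrix h.eC h.eC := by
      ext1 i j; simp
    rw [this, Matrix.det_submatrix_equiv_self, Matrix.det_permute]
  rw [e1, Matrix.det_fromBlocks_zero₁₂] at e2
  have e3 : ((h.corner Y).map Polynomial.C).det = Polynomial.C (h.corner Y).det := by
    rw [RingHom.map_det]; rfl
  have e4 := congrArg (fun p => Polynomial.coeff p (dBS c l)) e2
  rw [show ((h.corner Y).map (⇑(Polynomial.C : ℂ →+* Polynomial ℂ))).det = _ from e3,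
    Polynomial.coeff_mul_C, ← Polynomial.C_eq_intCast, Polynomial.coeff_C_mul] at e4
  rw [fpt, e4]

lemma Nm_big (A D : Matrix (Fin n) (Fin n) ℂ) (hD : D.rank ≤ c 1) (J : Finset (Fin n))
    (hJ : c 1 < Jᶜ.card) : (Nm A D J).det = 0 := by
  classical
  rw [← Matrix.exists_mulVec_eq_zero_iff]
  -- restrict `D` to the columns in `Jᶜ`
  let E : Matrix (Fin n) {j // j ∈ Jᶜ} ℂ := D.submatrix id (fun j => j.1)
  have hE : E.rank ≤ c 1 := by
    refine le_trans ?_ hD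
    have : E = D * (1 : Matrix (Fin n) (Fin n) ℂ).submatrix id (fun j : {j // j ∈ Jᶜ} => j.1) := by
      ext1 i j; simp [E, Matrix.mul_apply, Matrix.one_apply]
    rw [this]; exact Matrix.rank_mul_le_left _ _
  have hnz : ∃ v : {j // j ∈ Jᶜ} → ℂ, v ≠ 0 ∧ E.mulVec v = 0 := by
    by_contra hcon
    push Not at hcon
    have hinj : Function.Injective E.mulVecLin := by
      rw [← LinearMap.ker_eq_bot, LinearMap.ker_eq_bot']
      intro v hv
      by_contra hv0
      exact hcon v hv0 hv
    have := LinearMap.finrank_range_of_inj hinj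
    rw [Module.finrank_fintype_fun_eq_card, Fintype.card_coe] at this
    rw [Matrix.rank, this] at hE
    omega
  obtain ⟨v, hv, hEv⟩ := hnz
  refine ⟨fun j => if hj : j ∈ Jᶜ then Polynomial.C (v ⟨j, hj⟩) else 0, ?_, ?_⟩
  · intro h0
    apply hv
    ext j
    have := congrFun h0 j.1
    simpa [j.2] using this
  · ext1 i
    have h1 := congrFun hEv i
    simp only [Matrix.mulVec, dotProduct, Pi.zero_apply] at h1 ⊢
    have h2 : ∀ j, Nm A D J i j * (if hj : j ∈ Jᶜ then Polynomial.C (v ⟨j, hj⟩) else 0) =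
        if hj : j ∈ Jᶜ then Polynomial.C (E i ⟨j, hj⟩ * v ⟨j, hj⟩) else 0 := by
      intro j
      by_cases hj : j ∈ Jᶜ
      · have : j ∉ J := by simpa using hj
        rw [dif_pos hj, dif_pos hj]
        simp [Nm, E, this]
      · rw [dif_neg hj, dif_neg hj, mul_zero]
    rw [Finset.sum_congr rfl fun j _ => h2 j]
    rw [Finset.sum_dite, Finset.sum_const_zero, add_zero, ← map_sum]
    rw [← Polynomial.C_0, ← h1]
    congr 1
    symm
    refine Finset.sum_bij (fun j _ => ⟨j.1, Finset.mem_filter.2 ⟨Finset.mem_univ _, j.2⟩⟩) ?_ ?_ ?_ ?_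
    · intro a _; simp
    · intro a _ b _ hab
      exact Subtype.ext (congrArg (fun x => x.1) hab)
    · intro b _
      have := b.2
      simp only [Finset.mem_filter, Finset.mem_univ, true_and] at this
      exact ⟨⟨b.1, this⟩, by simp, rfl⟩
    · intro a _; rfl

lemma det_expand (A D : Matrix (Fin n) (Fin n) ℂ) :
    (Pm (A + D)).det = ∑ J : Finset (Fin n), (Nm A D J).det := by
  classical
  rw [← Matrix.det_transpose]
  have e : (Pm (A + D)).transpose = (Pm A).transpose + (D.map Polynomial.C).transpose := by
    ext1 i j; simp [Pm]; ring
  rw [e]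
  have := (Matrix.detRowAlternating (n := Fin n) (R := Polynomial ℂ)).map_add_univ
    (Pm A).transpose (D.map Polynomial.C).transpose
  refine this.trans (Finset.sum_congr rfl fun J _ => ?_)
  rw [← Matrix.det_transpose (Nm A D J)]
  show Matrix.det _ = Matrix.det _
  congr 1
  ext1 i j
  by_cases hi : i ∈ J <;> simp [Nm, Finset.piecewise, hi]

/-- Key lemma. -/
lemma key {A D : Matrix (Fin n) (Fin n) ℂ} (hA : Nil β A) (hD : D.rank ≤ c 1) :
    (Polynomial.X : Polynomial ℂ) ^ dBS c l ∣ (Pm (A + D)).det ∧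
    ((Equiv.Perm.sign (h.eC.symm.trans h.eR) : ℤ) : ℂ) * (Pm (A + D)).det.coeff (dBS c l) =
      fpt c l h.hm A * (h.corner D).det := by
  classical
  have hl := h.hl
  rw [h.det_expand]
  constructor
  · refine Finset.dvd_sum fun J _ => ?_
    by_cases hJ : Jᶜ.card ≤ c 1
    · exact h.Nm_dvd hA D J hJ
    · rw [h.Nm_big A D hD J (by omega)]; simp
  · rw [← h.Nm_special hA D, Polynomial.finsetSum_coeff]
    congr 1
    refine Finset.sum_eq_single _ ?_ (by simp)
    intro J _ hJ'
    by_cases hJ : Jᶜ.card ≤ c 1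
    · refine Polynomial.X_pow_dvd_iff.1 (h.Nm_dvd' hA D J hJ ?_) _ (by omega)
      intro h0; apply hJ'; rw [← h0, compl_compl]
    · rw [h.Nm_big A D hD J (by omega)]; simp

end BD

lemma fr_map {V : Type*} [AddCommGroup V] [Module ℂ V] [FiniteDimensional ℂ V]
    (X : V →ₗ[ℂ] V) (P : Submodule ℂ V) :
    Module.finrank ℂ (P.map X) + Module.finrank ℂ (P ⊓ LinearMap.ker X : Submodule ℂ V)
      = Module.finrank ℂ P := by
  have h1 := LinearMap.finrank_range_add_finrank_ker (X.domRestrict P)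
  have h2 : LinearMap.range (X.domRestrict P) = P.map X := LinearMap.range_domRestrict P X
  have h3 : Module.finrank ℂ (LinearMap.ker (X.domRestrict P)) =
      Module.finrank ℂ (P ⊓ LinearMap.ker X : Submodule ℂ V) := by
    have : (LinearMap.ker (X.domRestrict P)).map P.subtype = P ⊓ LinearMap.ker X := by
      ext v
      simp only [Submodule.mem_map, LinearMap.mem_ker, Submodule.mem_inf]
      constructor
      · rintro ⟨w, hw, rfl⟩; exact ⟨w.2, hw⟩
      · rintro ⟨h1, h2⟩; exact ⟨⟨v, h1⟩, h2, rfl⟩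
    rw [← this]
    exact (LinearEquiv.finrank_eq (Submodule.equivMapOfInjective _ P.injective_subtype _))
  rw [← h2, ← h3, h1]

lemma exists_pert {V : Type*} [AddCommGroup V] [Module ℂ V] [FiniteDimensional ℂ V]
    (X : Module.End ℂ V) (hX : IsNilpotent X) (r s c : ℕ)
    (h0 : Module.finrank ℂ (LinearMap.range (X ^ r)) ≤ s + 2 * c)
    (h1 : s + c ≤ Module.finrank ℂ (LinearMap.range (X ^ (r + 1))))
    (h2 : Module.finrank ℂ (LinearMap.range (X ^ (r + 2))) ≤ s) :
    ∃ D : Module.End ℂ V, Module.finrank ℂ (LinearMap.range D) ≤ c ∧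
      ∃ A : Submodule ℂ V, A.map (X + D) ≤ A ∧ A ⊓ LinearMap.ker (X + D) = ⊥ ∧
        s + c + (r + 1) * c ≤ Module.finrank ℂ A := by
  have hsucc : ∀ (P : Submodule ℂ V) k, P.map (X ^ (k + 1)) = (P.map (X ^ k)).map X := by
    intro P k
    rw [pow_succ', Module.End.mul_eq_comp, Submodule.map_comp]
  have hsucc' : ∀ (P : Submodule ℂ V) k, P.map (X ^ (k + 1)) = (P.map X).map (X ^ k) := by
    intro P k
    rw [pow_succ, Module.End.mul_eq_comp, Submodule.map_comp]
  have hr : ∀ k, LinearMap.range (X ^ k) = (⊤ : Submodule ℂ V).map (X ^ k) := fun k => by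
    rw [Submodule.map_top]
  have anti : ∀ (P : Submodule ℂ V), P.map X ≤ P → ∀ k, P.map (X ^ (k + 1)) ≤ P.map (X ^ k) := by
    intro P hP k
    rw [hsucc']; exact Submodule.map_mono hP
  -- concavity
  have conc : ∀ (P : Submodule ℂ V), P.map X ≤ P → ∀ k,
      Module.finrank ℂ (P.map (X ^ (k + 1))) + Module.finrank ℂ (P.map (X ^ (k + 1))) ≤
      Module.finrank ℂ (P.map (X ^ k)) + Module.finrank ℂ (P.map (X ^ (k + 2))) := by
    intro P hP k
    have e1 := fr_map X (P.map (X ^ k))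
    have e2 := fr_map X (P.map (X ^ (k + 1)))
    rw [← hsucc] at e1 e2
    have := Submodule.finrank_mono (inf_le_inf_right (LinearMap.ker X) (anti P hP k))
    have e3 : k + 1 + 1 = k + 2 := rfl
    rw [e3] at e2
    omega
  have c1 := conc ⊤ le_top r
  rw [← hr, ← hr, ← hr] at c1
  have ha1 : Module.finrank ℂ (LinearMap.range (X ^ (r + 1))) = s + c := by omega
  have ha2 : Module.finrank ℂ (LinearMap.range (X ^ (r + 2))) = s := by omega
  -- the complement
  set W := LinearMap.range X ⊔ LinearMap.ker (X ^ (r + 1)) with hW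
  obtain ⟨G, hG⟩ := Submodule.exists_isCompl W
  have hWmap : W.map (X ^ (r + 1)) = LinearMap.range (X ^ (r + 2)) := by
    have k1 : (LinearMap.ker (X ^ (r + 1))).map (X ^ (r + 1)) = ⊥ := by
      rw [eq_bot_iff]
      rintro _ ⟨v, hv, rfl⟩
      exact hv
    have k2 : (LinearMap.range X).map (X ^ (r + 1)) = LinearMap.range (X ^ (r + 2)) := by
      have := hsucc' ⊤ (r + 1)
      rw [Submodule.map_top, Submodule.map_top] at this
      exact this.symm
    rw [hW, Submodule.map_sup, k1, k2, sup_bot_eq]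
  have hGc : Module.finrank ℂ G = c := by
    have e1 := fr_map (X ^ (r + 1)) W
    rw [hWmap, ha2, inf_eq_right.2 (show LinearMap.ker (X ^ (r + 1)) ≤ W from le_sup_right)] at e1
    have e2 := LinearMap.finrank_range_add_finrank_ker (X ^ (r + 1))
    have e3 := Submodule.finrank_add_eq_of_isCompl hG
    omega
  set A : Submodule ℂ V := ⨆ k : ℕ, G.map (X ^ k) with hA
  have hXA : A.map X ≤ A := by
    rw [hA, Submodule.map_iSup]
    refine iSup_le fun k => ?_
    rw [← hsucc]
    exact le_iSup (fun k => G.map (X ^ k)) (k + 1)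
  have hGA : G ≤ A := by
    have := le_iSup (fun k => G.map (X ^ k)) 0
    simpa [Module.End.one_eq_id] using this
  have hAG : G ⊔ A.map X = A := by
    apply le_antisymm (sup_le hGA hXA)
    conv_lhs => rw [hA]
    refine iSup_le fun k => ?_
    rcases k with _ | k
    · refine le_trans ?_ le_sup_left
      simp [Module.End.one_eq_id]
    · rw [hsucc]
      exact le_trans (Submodule.map_mono (le_iSup (fun k => G.map (X ^ k)) k)) le_sup_right
  have hpowA : ∀ k, A.map (X ^ k) ≤ A := by
    intro k
    induction k with
    | zero => simp [Module.End.one_eq_id]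
    | succ k ih => exact (anti A hXA k).trans ih
  have hB : LinearMap.range (X ^ (r + 1)) = A.map (X ^ (r + 1)) := by
    apply le_antisymm
    · have s1 : ∀ j, LinearMap.range (X ^ (r + 1 + j)) ≤
          A.map (X ^ (r + 1)) ⊔ LinearMap.range (X ^ (r + 1 + (j + 1))) := by
        intro j
        have t1 : LinearMap.range (X ^ (r + 1)) ≤
            A.map (X ^ (r + 1)) ⊔ LinearMap.range (X ^ (r + 2)) := by
          rw [hr (r + 1), ← hG.sup_eq_top, Submodule.map_sup, hWmap]
          exact sup_le le_sup_right (le_trans (Submodule.map_mono hGA) le_sup_left)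
        have t2 := Submodule.map_mono (f := X ^ j) t1
        rw [Submodule.map_sup, hr, hr, ← Submodule.map_comp, ← Submodule.map_comp,
          ← Submodule.map_comp, ← Module.End.mul_eq_comp, ← Module.End.mul_eq_comp, ← pow_add,
          ← pow_add] at t2
        rw [hr, hr, show r + 1 + j = j + (r + 1) by ring,
          show r + 1 + (j + 1) = j + (r + 2) by ring]
        refine t2.trans (sup_le_sup_right ?_ _)
        rw [add_comm, pow_add, Module.End.mul_eq_comp, Submodule.map_comp]
        exact Submodule.map_mono (hpowA j)
      have s2 : ∀ j, LinearMap.range (X ^ (r + 1)) ≤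
          A.map (X ^ (r + 1)) ⊔ LinearMap.range (X ^ (r + 1 + j)) := by
        intro j
        induction j with
        | zero => exact le_sup_right
        | succ j ih => exact ih.trans (sup_le le_sup_left (s1 j))
      obtain ⟨N, hN⟩ := hX
      have := s2 N
      rwa [pow_add X (r + 1) N, hN, mul_zero, LinearMap.range_zero, sup_bot_eq] at this
    · rw [hr]; exact Submodule.map_mono le_top
  have hb1 : Module.finrank ℂ (A.map (X ^ (r + 1))) = s + c := by rw [← hB, ha1]
  have hb2 : Module.finrank ℂ (A.map (X ^ (r + 2))) = s := by
    rw [hsucc, ← hB, hr, ← hsucc, ← hr, ha2]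
  have hdrop : ∀ j, j ≤ r + 1 → Module.finrank ℂ (A.map (X ^ (r + 1 - j + 1))) + c ≤
      Module.finrank ℂ (A.map (X ^ (r + 1 - j))) := by
    intro j
    induction j with
    | zero => intro _; simp only [Nat.sub_zero]; rw [hb1, hb2]
    | succ j ih =>
      intro hj
      have e := ih (by omega)
      have := conc A hXA (r + 1 - (j + 1))
      rw [show r + 1 - (j + 1) + 1 = r + 1 - j by omega,
        show r + 1 - (j + 1) + 2 = r + 1 - j + 1 by omega] at this
      rw [show r + 1 - (j + 1) + 1 = r + 1 - j by omega]
      omega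
  have hsum : ∀ j, j ≤ r + 1 → s + c + j * c ≤ Module.finrank ℂ (A.map (X ^ (r + 1 - j))) := by
    intro j
    induction j with
    | zero => intro _; simp [hb1]
    | succ j ih =>
      intro hj
      have e := ih (by omega)
      have := hdrop (j + 1) hj
      rw [show r + 1 - (j + 1) + 1 = r + 1 - j by omega] at this
      rw [Nat.succ_mul]
      omega
  have hb0 : A.map (X ^ 0) = A := by simp [Module.End.one_eq_id]
  have hdimA : s + c + (r + 1) * c ≤ Module.finrank ℂ A := by
    have := hsum (r + 1) le_rfl
    rwa [Nat.sub_self, hb0] at this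
  have hd0 : Module.finrank ℂ (A.map X) + c ≤ Module.finrank ℂ A := by
    have := hdrop (r + 1) le_rfl
    rw [Nat.sub_self, hb0, zero_add, pow_one] at this
    exact this
  have e1 := Submodule.finrank_sup_add_finrank_inf_eq G (A.map X)
  rw [hAG, hGc] at e1
  have e2 := fr_map X A
  have hinf : G ⊓ A.map X = ⊥ := by
    rw [← Submodule.finrank_eq_zero (R := ℂ)]; omega
  have hker : Module.finrank ℂ (A ⊓ LinearMap.ker X : Submodule ℂ V) = Module.finrank ℂ G := by
    omega
  let e : (A ⊓ LinearMap.ker X : Submodule ℂ V) ≃ₗ[ℂ] G := LinearEquiv.ofFinrankEq _ _ hker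
  obtain ⟨p, hp⟩ := LinearMap.exists_leftInverse_of_injective
    (A ⊓ LinearMap.ker X : Submodule ℂ V).subtype (Submodule.ker_subtype _)
  let D : Module.End ℂ V := G.subtype ∘ₗ e.toLinearMap ∘ₗ p
  have hDG : ∀ v, D v ∈ G := fun v => (e (p v)).2
  refine ⟨D, ?_, A, ?_, ?_, hdimA⟩
  · rw [← hGc]
    apply Submodule.finrank_mono
    rintro _ ⟨v, rfl⟩; exact hDG v
  · rintro _ ⟨v, hv, rfl⟩
    exact A.add_mem (hXA ⟨v, hv, rfl⟩) (hGA (hDG v))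
  · rw [eq_bot_iff]
    rintro v ⟨hvA, hv⟩
    have hv' : X v + D v = 0 := hv
    have hXv : X v ∈ G ⊓ A.map X := by
      refine ⟨?_, ⟨v, hvA, rfl⟩⟩
      rw [eq_neg_of_add_eq_zero_left hv']
      exact G.neg_mem (hDG v)
    rw [hinf, Submodule.mem_bot] at hXv
    rw [hXv, zero_add] at hv'
    let w : (A ⊓ LinearMap.ker X : Submodule ℂ V) := ⟨v, hvA, hXv⟩
    have hpw : p v = w := LinearMap.congr_fun hp w
    have : e w = 0 := by
      apply Subtype.ext
      rw [← hpw]; exact hv'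
    have hw : w = 0 := by simpa using this
    exact congrArg Subtype.val hw

lemma Pm_trailing {n : ℕ} (Y : Matrix (Fin n) (Fin n) ℂ) :
    Module.finrank ℂ (Module.End.maxGenEigenspace (Matrix.toLin' (-Y)) 0) = (Pm Y).det.natTrailingDegree := by
  rw [LinearMap.finrank_maxGenEigenspace_zero_eq, Matrix.charpoly_toLin', Pm_charpoly]

lemma neg_pow_ker {n : ℕ} (Y : Matrix (Fin n) (Fin n) ℂ) (k : ℕ) (v : Fin n → ℂ) :
    ((Matrix.toLin' (-Y)) ^ k) v = 0 ↔ ((Matrix.toLin' Y) ^ k) v = 0 := by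
  have e : (-(Matrix.toLin' Y) : Module.End ℂ (Fin n → ℂ)) ^ k = (-1) ^ k * (Matrix.toLin' Y) ^ k :=
    neg_pow (R := Module.End ℂ (Fin n → ℂ)) (Matrix.toLin' Y) k
  rw [map_neg, e]
  rcases neg_one_pow_eq_or (Module.End ℂ (Fin n → ℂ)) k with h | h <;> rw [h] <;> simp

lemma K3a {n : ℕ} (Y : Matrix (Fin n) (Fin n) ℂ) (k d : ℕ) (h : (Y ^ k).rank + d < n) :
    (Pm Y).det.coeff d = 0 := by
  apply Polynomial.coeff_eq_zero_of_lt_natTrailingDegree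
  rw [← Pm_trailing]
  have h1 : LinearMap.ker ((Matrix.toLin' Y) ^ k) ≤ Module.End.maxGenEigenspace (Matrix.toLin' (-Y)) 0 := by
    intro v hv
    rw [Module.End.mem_maxGenEigenspace]
    refine ⟨k, ?_⟩
    rw [zero_smul, sub_zero, neg_pow_ker]
    exact hv
  have h2 := Submodule.finrank_mono h1
  have h3 := LinearMap.finrank_range_add_finrank_ker ((Matrix.toLin' Y) ^ k)
  rw [← Matrix.toLin'_pow] at h3 h2
  rw [Module.finrank_fin_fun] at h3
  have h4 : (Y ^ k).rank = Module.finrank ℂ (LinearMap.range (Matrix.toLin' (Y ^ k))) := by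
    rw [Matrix.rank, Matrix.toLin'_apply']
  omega

lemma K3b {n : ℕ} (Y : Matrix (Fin n) (Fin n) ℂ) (d : ℕ) (A : Submodule ℂ (Fin n → ℂ))
    (h1 : A.map (Matrix.toLin' Y) ≤ A) (h2 : A ⊓ LinearMap.ker (Matrix.toLin' Y) = ⊥)
    (h3 : n ≤ Module.finrank ℂ A + d) : ¬ (Polynomial.X ^ (d + 1) ∣ (Pm Y).det) := by
  intro hdvd
  have hne : (Pm Y).det ≠ 0 := by
    rw [Pm_charpoly]; exact (Matrix.charpoly_monic _).ne_zero
  have hd : d < (Pm Y).det.natTrailingDegree := by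
    by_contra hcon
    rw [Polynomial.X_pow_dvd_iff] at hdvd
    have := hdvd _ (show (Pm Y).det.natTrailingDegree < d + 1 by omega)
    exact hne (Polynomial.trailingCoeff_eq_zero.1 this)
  rw [← Pm_trailing] at hd
  have key : ∀ k, ∀ v ∈ A, ((Matrix.toLin' Y) ^ k) v = 0 → v = 0 := by
    intro k
    induction k with
    | zero => intro v _ hv; simpa using hv
    | succ k ih =>
      intro v hv hk
      rw [pow_succ, Module.End.mul_apply] at hk
      have e := ih _ (h1 ⟨v, hv, rfl⟩) hk
      have : v ∈ A ⊓ LinearMap.ker (Matrix.toLin' Y) := ⟨hv, e⟩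
      rw [h2] at this
      exact (Submodule.mem_bot ℂ).1 this
  have hdis : A ⊓ Module.End.maxGenEigenspace (Matrix.toLin' (-Y)) 0 = ⊥ := by
    rw [eq_bot_iff]
    rintro v ⟨hv, hv2⟩
    rw [SetLike.mem_coe, Module.End.mem_maxGenEigenspace] at hv2
    obtain ⟨k, hk⟩ := hv2
    rw [zero_smul, sub_zero, neg_pow_ker] at hk
    exact (Submodule.mem_bot ℂ).2 (key k v hv hk)
  have e := Submodule.finrank_sup_add_finrank_inf_eq A (Module.End.maxGenEigenspace (Matrix.toLin' (-Y)) 0)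
  rw [hdis, finrank_bot] at e
  have e2 := Submodule.finrank_le (A ⊔ Module.End.maxGenEigenspace (Matrix.toLin' (-Y)) 0)
  rw [Module.finrank_fin_fun] at e2
  omega

lemma rank_eq_range {n : ℕ} (Y : Matrix (Fin n) (Fin n) ℂ) (k : ℕ) :
    (Y ^ k).rank = Module.finrank ℂ (LinearMap.range ((Matrix.toLin' Y) ^ k)) := by
  rw [← Matrix.toLin'_pow, Matrix.rank, Matrix.toLin'_apply']

lemma rank_eq_range1 {n : ℕ} (Y : Matrix (Fin n) (Fin n) ℂ) :
    Y.rank = Module.finrank ℂ (LinearMap.range (Matrix.toLin' Y)) := by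
  rw [Matrix.rank, Matrix.toLin'_apply']

lemma rank_add_le' {n : ℕ} (Y Z : Matrix (Fin n) (Fin n) ℂ) : (Y + Z).rank ≤ Y.rank + Z.rank := by
  rw [rank_eq_range1, rank_eq_range1, rank_eq_range1, map_add]
  refine le_trans (Submodule.finrank_mono (LinearMap.range_add_le _ _)) ?_
  exact Submodule.finrank_add_le_finrank_add_finrank _ _

lemma rank_pert {n : ℕ} (Y D : Matrix (Fin n) (Fin n) ℂ) (k : ℕ) :
    ((Y + D) ^ k).rank ≤ (Y ^ k).rank + k * D.rank := by
  have : ((Y + D) ^ k - Y ^ k).rank ≤ k * D.rank := by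
    induction k with
    | zero => simp
    | succ k ih =>
      have e : (Y + D) ^ (k + 1) - Y ^ (k + 1) = ((Y + D) ^ k - Y ^ k) * Y + (Y + D) ^ k * D := by
        rw [pow_succ, pow_succ]; noncomm_ring
      rw [e, Nat.succ_mul]
      refine (rank_add_le' _ _).trans (add_le_add ((Matrix.rank_mul_le_left _ _).trans ih)
        (Matrix.rank_mul_le_right _ _))
  have e := rank_add_le' (Y ^ k) ((Y + D) ^ k - Y ^ k)
  rw [add_sub_cancel] at e
  omega

def Fsp {n : ℕ} (β : Fin n → ℕ) (i : ℕ) : Submodule ℂ (Fin n → ℂ) :=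
  Submodule.span ℂ {v : Fin n → ℂ | ∃ a, i ≤ β a ∧ v = Pi.single a 1}

lemma Fsp_map {n : ℕ} {β : Fin n → ℕ} {A : Matrix (Fin n) (Fin n) ℂ} (hA : Nil β A) (i : ℕ) :
    (Fsp β i).map (Matrix.toLin' A) ≤ Fsp β (i + 1) := by
  rw [Fsp, Submodule.map_span, Submodule.span_le]
  rintro _ ⟨_, ⟨a, ha, rfl⟩, rfl⟩
  rw [Matrix.toLin'_apply, Matrix.mulVec_single_one, SetLike.mem_coe, ← Finset.univ_sum_single (A.col a)]
  refine Submodule.sum_mem _ fun b _ => ?_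
  have : (Pi.single b (A.col a b) : Fin n → ℂ) = A b a • Pi.single b 1 := by
    rw [← Pi.single_smul]; simp
  rw [this]
  by_cases hb : β a < β b
  · exact Submodule.smul_mem _ _ (Submodule.subset_span ⟨b, by omega, rfl⟩)
  · rw [hA b a hb, zero_smul]; exact Submodule.zero_mem _

lemma Fsp_succ {n : ℕ} (β : Fin n → ℕ) (i : ℕ) : ∃ G : Submodule ℂ (Fin n → ℂ),
    Module.finrank ℂ G ≤ (univ.filter (fun a => β a = i)).card ∧ Fsp β i ≤ Fsp β (i + 1) ⊔ G := by
  refine ⟨Submodule.span ℂ (((univ.filter (fun a => β a = i)).image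
    (fun a => (Pi.single a 1 : Fin n → ℂ)) : Finset _) : Set (Fin n → ℂ)), ?_, ?_⟩
  · exact (finrank_span_finset_le_card _).trans Finset.card_image_le
  · rw [Fsp, Submodule.span_le]
    rintro _ ⟨a, ha, rfl⟩
    rcases ha.lt_or_eq with h | h
    · exact Submodule.mem_sup_left (Submodule.subset_span ⟨a, h, rfl⟩)
    · refine Submodule.mem_sup_right (Submodule.subset_span ?_)
      simp only [coe_image, Set.mem_image]
      exact ⟨a, by simp [h], rfl⟩

lemma rank_bound_aux {n : ℕ} {β : Fin n → ℕ} {A : Matrix (Fin n) (Fin n) ℂ} (hA : Nil β A)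
    (l : ℕ) (hβ : ∀ a, β a ≤ l) (S : Finset ℕ) (j : ℕ) (hj : j ≤ l) :
    Module.finrank ℂ ((Fsp β (l + 1 - j)).map
      ((Matrix.toLin' A) ^ ((Finset.Icc (l + 1 - j) l ∩ S).card))) ≤
    ∑ i ∈ Finset.Icc (l + 1 - j) l \ S, (univ.filter (fun a => β a = i)).card := by
  induction j with
  | zero =>
    have : Fsp β (l + 1 - 0) = ⊥ := by
      rw [Fsp, Submodule.span_eq_bot]
      rintro _ ⟨a, ha, rfl⟩
      have := hβ a
      omega
    rw [this]; simp
  | succ j ih =>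
    have ih := ih (by omega)
    obtain ⟨i, hi⟩ : ∃ i, i = l + 1 - (j + 1) := ⟨_, rfl⟩
    rw [← hi]
    rw [show l + 1 - j = i + 1 by omega] at ih
    have hI : Finset.Icc i l = insert i (Finset.Icc (i + 1) l) := by
      ext x; simp only [Finset.mem_Icc, Finset.mem_insert]; omega
    rw [hI]
    have hni : i ∉ Finset.Icc (i + 1) l := by simp
    by_cases hS : i ∈ S
    · rw [Finset.insert_inter_of_mem hS, Finset.insert_sdiff_of_mem _ hS,
        Finset.card_insert_of_notMem (by simp), pow_succ, Module.End.mul_eq_comp, Submodule.map_comp]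
      exact (Submodule.finrank_mono (Submodule.map_mono (Fsp_map hA i))).trans ih
    · rw [Finset.insert_inter_of_notMem hS, Finset.insert_sdiff_of_notMem _ hS,
        Finset.sum_insert (by simp)]
      obtain ⟨G, hG, hle⟩ := Fsp_succ β i
      refine (Submodule.finrank_mono (Submodule.map_mono hle)).trans ?_
      rw [Submodule.map_sup]
      refine (Submodule.finrank_add_le_finrank_add_finrank _ _).trans ?_
      have := (Submodule.finrank_map_le ((Matrix.toLin' A) ^ ((Finset.Icc (i + 1) l ∩ S).card)) G)
      omega

lemma BD.rank_bound {n m l : ℕ} {c : ℕ → ℕ} {β : Fin n → ℕ} (h : BD n m l c β)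
    {A : Matrix (Fin n) (Fin n) ℂ} (hA : Nil β A) (S : Finset ℕ) (hS : S ⊆ Finset.Icc 1 l) :
    (A ^ S.card).rank ≤ ∑ i ∈ Finset.Icc 1 l \ S, c i := by
  have := rank_bound_aux hA l (fun a => (Finset.mem_Icc.1 (h.rng a)).2) S l le_rfl
  rw [show l + 1 - l = 1 by omega, Finset.inter_eq_right.2 hS] at this
  rw [rank_eq_range, ← Submodule.map_top]
  have e : Fsp β 1 = ⊤ := by
    rw [eq_top_iff, Fsp, ← (Pi.basisFun ℂ (Fin n)).span_eq]
    apply Submodule.span_mono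
    rintro _ ⟨a, rfl⟩
    refine ⟨a, ?_, by simp⟩
    have := (Finset.mem_Icc.1 (h.rng a)).1
    omega
  rw [e] at this
  refine this.trans (le_of_eq ?_)
  refine Finset.sum_congr rfl fun i hi => h.card i ?_
  exact (Finset.mem_sdiff.1 hi).1

namespace BD
variable {n m l : ℕ} {c : ℕ → ℕ} {β : Fin n → ℕ} (h : BD n m l c β)
include h

lemma lemN {A D : Matrix (Fin n) (Fin n) ℂ} (hA : Nil β A) (hD : D.rank ≤ c 1)
    (W : Submodule ℂ (Fin n → ℂ)) (h1 : W.map (Matrix.toLin' (A + D)) ≤ W)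
    (h2 : W ⊓ LinearMap.ker (Matrix.toLin' (A + D)) = ⊥)
    (h3 : n ≤ Module.finrank ℂ W + dBS c l) : fpt c l h.hm A ≠ 0 := by
  intro h0
  obtain ⟨k1, k2⟩ := h.key hA hD
  refine K3b (A + D) (dBS c l) W h1 h2 h3 ?_
  rw [Polynomial.X_pow_dvd_iff] at k1 ⊢
  intro i hi
  rcases (Nat.lt_succ_iff.1 hi).lt_or_eq with h4 | h4
  · exact k1 i h4
  · rw [h0, zero_mul, mul_eq_zero] at k2
    rw [h4]
    refine k2.resolve_left ?_
    simp

lemma fpt_zero_of_rank {r s : ℕ} (hr : r = ((Finset.Icc 1 l).filter fun i => c 1 < c i).card)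
    (hs : s = (∑ i ∈ (Finset.Icc 1 l).filter (fun i => c i ≤ c 1), c i) - 2 * c 1)
    {A : Matrix (Fin n) (Fin n) ℂ} (hA : Nil β A) (hrk : (A ^ (r + 1)).rank < s + c 1) :
    fpt c l h.hm A = 0 := by
  let U : Matrix (Fin n) (Fin (c 1)) ℂ := Matrix.of fun i a => if i = h.eR (Sum.inr a) then 1 else 0
  let W : Matrix (Fin (c 1)) (Fin n) ℂ := Matrix.of fun a j => if j = h.eC (Sum.inr a) then 1 else 0
  have hD : (U * W).rank ≤ c 1 := by
    refine (Matrix.rank_mul_le_left _ _).trans ((Matrix.rank_le_card_width U).trans ?_)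
    simp
  have hc : h.corner (U * W) = 1 := by
    ext i j
    simp [corner, U, W, Matrix.mul_apply, Matrix.one_apply]
  obtain ⟨k1, k2⟩ := h.key hA hD
  rw [hc, Matrix.det_one, mul_one] at k2
  rw [← k2, K3a (A + U * W) (r + 1), mul_zero]
  have e1 := rank_pert A (U * W) (r + 1)
  have e2 := (h.n_eq' hr hs).2
  have e3 : (r + 1) * (U * W).rank ≤ (r + 1) * c 1 := Nat.mul_le_mul_left _ hD
  have e4 : (r + 1) * c 1 = r * c 1 + c 1 := by ring
  omega

lemma fpt_ne_zero_of_rank {r s : ℕ} (hr : r = ((Finset.Icc 1 l).filter fun i => c 1 < c i).card)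
    (hs : s = (∑ i ∈ (Finset.Icc 1 l).filter (fun i => c i ≤ c 1), c i) - 2 * c 1)
    {A : Matrix (Fin n) (Fin n) ℂ} (hA : Nil β A) (hrk : s + c 1 ≤ (A ^ (r + 1)).rank) :
    fpt c l h.hm A ≠ 0 := by
  obtain ⟨hs1, hn⟩ := h.n_eq' hr hs
  have hl := h.hl
  have h0 : (A ^ r).rank ≤ s + 2 * c 1 := by
    have := h.rank_bound hA ((Finset.Icc 1 l).filter fun i => c 1 < c i) (Finset.filter_subset _ _)
    rw [← hr] at this
    refine this.trans (le_of_eq ?_)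
    rw [← hs1]
    refine Finset.sum_congr ?_ fun _ _ => rfl
    ext i; simp
    intro _ _
    constructor <;> intro h <;> omega
  have h2 : (A ^ (r + 2)).rank ≤ s := by
    have hd : Disjoint ((Finset.Icc 1 l).filter fun i => c 1 < c i) ({1, l} : Finset ℕ) := by
      rw [Finset.disjoint_left]
      intro i hi; simp at hi ⊢
      constructor
      · rintro rfl; omega
      · rintro rfl; rw [h.hcl] at hi; omega
    have hsub : ({1, l} : Finset ℕ) ⊆ Finset.Icc 1 l := by
      intro i; simp; omega
    have := h.rank_bound hA (((Finset.Icc 1 l).filter fun i => c 1 < c i) ∪ {1, l})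
      (Finset.union_subset (Finset.filter_subset _ _) hsub)
    rw [Finset.card_union_of_disjoint hd, ← hr, Finset.card_pair (by omega)] at this
    refine this.trans ?_
    have e1 : ((Finset.Icc 1 l).filter (fun i => c i ≤ c 1)) =
        (Finset.Icc 1 l \ (((Finset.Icc 1 l).filter fun i => c 1 < c i) ∪ {1, l})) ∪ {1, l} := by
      ext i
      simp only [Finset.mem_filter, Finset.mem_union, Finset.mem_sdiff, Finset.mem_Icc,
        Finset.mem_insert, Finset.mem_singleton]
      have := h.hcl
      by_cases h1 : i = 1
      · subst h1; simp; omega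
      · by_cases h2 : i = l
        · subst h2; simp; omega
        · simp only [h1, h2, or_self, or_false]
          omega
    rw [e1, Finset.sum_union, Finset.sum_pair (by omega), h.hcl] at hs1
    · omega
    · rw [Finset.disjoint_left]
      intro i hi; simp at hi ⊢; tauto
  have hnil : IsNilpotent (Matrix.toLin' A : Module.End ℂ (Fin n → ℂ)) := by
    refine ⟨l, ?_⟩
    have := h.rank_bound hA (Finset.Icc 1 l) le_rfl
    rw [Finset.sdiff_self, Finset.sum_empty, Nat.card_Icc, Nat.add_sub_cancel, rank_eq_range] at this
    rw [← LinearMap.range_eq_bot, ← Submodule.finrank_eq_zero (R := ℂ)]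
    omega
  rw [rank_eq_range] at h0 h2 hrk
  obtain ⟨D, hD, W, hW1, hW2, hW3⟩ := exists_pert _ hnil r s (c 1) h0 hrk h2
  have hDe : Matrix.toLin' (A + LinearMap.toMatrix' D) = Matrix.toLin' A + D := by
    rw [map_add, Matrix.toLin'_toMatrix']
  refine h.lemN (D := LinearMap.toMatrix' D) hA ?_ W ?_ ?_ ?_
  · rw [rank_eq_range1, Matrix.toLin'_toMatrix']; exact hD
  · rw [hDe]; exact hW1
  · rw [hDe]; exact hW2
  · have e4 : (r + 1) * c 1 = r * c 1 + c 1 := by ring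
    omega

end BD

lemma blkSum_mono (c : ℕ → ℕ) : Monotone (blkSum c) := by
  intro i j hij
  apply Finset.sum_le_sum_of_subset
  exact Finset.Icc_subset_Icc_right hij

lemma blkSum_succ (c : ℕ → ℕ) (j : ℕ) : blkSum c (j + 1) = blkSum c j + c (j + 1) := by
  rw [blkSum, Finset.sum_Icc_succ_top (by omega), blkSum]

lemma blk_le_iff (c : ℕ → ℕ) (l x j : ℕ) (hx : x ≤ blkSum c l) : blk c x ≤ j ↔ x ≤ blkSum c j := by
  constructor
  · intro h
    have : blk c x ∈ {j | x ≤ blkSum c j} := Nat.sInf_mem ⟨l, hx⟩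
    exact le_trans this (blkSum_mono c h)
  · intro h
    exact Nat.sInf_le h

lemma BD_blk (l : ℕ) (hl : 2 ≤ l) (c : ℕ → ℕ) (hc : ∀ i ∈ Finset.Icc 1 l, 0 < c i)
    (hcl : c l = c 1) (n : ℕ) (hn : n = blkSum c l) (m : ℕ) (hm : m + c 1 = n) :
    BD n m l c (fun a => blk c (a.1 + 1)) := by
  have key : ∀ (a : Fin n) (j : ℕ), blk c (a.1 + 1) ≤ j ↔ a.1 + 1 ≤ blkSum c j := fun a j =>
    blk_le_iff c l _ j (by have := a.2; omega)
  have b0 : blkSum c 0 = 0 := by simp [blkSum]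
  have b1 : blkSum c 1 = c 1 := by simp [blkSum]
  have ge1 : ∀ a : Fin n, 1 ≤ blk c (a.1 + 1) := by
    intro a
    by_contra hcon
    have := (key a 0).1 (by omega)
    omega
  have lel : ∀ a : Fin n, blk c (a.1 + 1) ≤ l := by
    intro a
    rw [key]; have := a.2; omega
  refine ⟨hl, hc, hcl, hm, ?_, ?_, ?_, ?_, ?_⟩
  · intro a b hab
    have hab' : a.1 ≤ b.1 := hab
    simp only
    rw [key]
    have := (key b _).1 le_rfl
    omega
  · intro a
    exact Finset.mem_Icc.2 ⟨ge1 a, lel a⟩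
  · intro i hi
    rw [Finset.mem_Icc] at hi
    obtain ⟨i, rfl⟩ : ∃ k, i = k + 1 := ⟨i - 1, by omega⟩
    have hle := blkSum_mono c hi.2
    have hs := blkSum_succ c i
    have : (Finset.Ico (blkSum c i) (blkSum c (i + 1))).card = c (i + 1) := by
      rw [Nat.card_Ico]; omega
    rw [← this]
    have key2 : ∀ a : Fin n, blk c (a.1 + 1) = i + 1 ↔ blkSum c i ≤ a.1 ∧ a.1 < blkSum c (i + 1) := by
      intro a
      have k1 := key a i
      have k2 := key a (i + 1)
      omega
    apply Finset.card_bij (fun a _ => a.1)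
    · intro a ha
      simpa [key2] using ha
    · intro a _ b _ hab; exact Fin.ext hab
    · intro b hb
      rw [Finset.mem_Ico] at hb
      exact ⟨⟨b, by omega⟩, by simp [key2]; exact hb, rfl⟩
  · intro a
    have k1 := key a 1
    have := ge1 a
    omega
  · intro a
    have k1 := key a (l - 1)
    have := lel a
    have e := blkSum_succ c (l - 1)
    rw [show l - 1 + 1 = l by omega] at e
    omega

lemma Nil_Xpt (c : ℕ → ℕ) (n : ℕ) (ξ : Pos c n → ℂ) :
    Nil (fun a : Fin n => blk c (a.1 + 1)) (Xpt c n ξ) := by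
  intro i j hij
  simp only [Xpt, Matrix.of_apply]
  rw [dif_neg]
  tauto

lemma eval_genX (c : ℕ → ℕ) (n : ℕ) (ξ : Pos c n → ℂ) :
    (genX c n).map (MvPolynomial.eval ξ) = Xpt c n ξ := by
  ext a b
  simp only [genX, Xpt, Matrix.map_apply, Matrix.of_apply]
  split_ifs <;> simp

lemma eval_BSf (c : ℕ → ℕ) (l n m : ℕ) (h : m + c 1 = n) (ξ : Pos c n → ℂ) :
    MvPolynomial.eval ξ (BSf c l n m h) = fpt c l h (Xpt c n ξ) := by
  rw [BSf, fpt, ← Polynomial.coeff_map, ← Polynomial.coe_mapRingHom, RingHom.map_det]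
  congr 2
  ext1 i j
  have := congrFun (congrFun (eval_genX c n ξ) (rowE h i)) (colE h j)
  simp only [Matrix.map_apply] at this
  simp only [RingHom.mapMatrix_apply, Matrix.map_apply, Mmat, Matrix.of_apply, Pm,
    Matrix.submatrix_apply, ← this]
  rw [map_add]
  congr 1
  · simp [rowE, colE]
  · rw [show (Fin.cast h (i.addNat (c 1))) = rowE h i from rfl]
    rw [show (Fin.castLE _ j) = colE h j from rfl]
    split_ifs <;> simp

section wt
variable {σ : Type*} [Fintype σ]

def wφ (w : σ → ℕ) : MvPolynomial σ ℂ →+* Polynomial (MvPolynomial σ ℂ) :=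
  MvPolynomial.eval₂Hom (Polynomial.C.comp MvPolynomial.C) (fun p => Polynomial.X ^ (w p) * Polynomial.C (X p))

lemma wφ_monomial (w : σ → ℕ) (μ : σ →₀ ℕ) (a : ℂ) :
    wφ w (monomial μ a) = Polynomial.X ^ (∑ p, μ p * w p) * Polynomial.C (monomial μ a) := by
  rw [wφ, MvPolynomial.coe_eval₂Hom, MvPolynomial.eval₂_monomial, MvPolynomial.monomial_eq,
    Finsupp.prod_fintype _ _ (by simp), Finsupp.prod_fintype _ _ (by simp)]
  simp only [mul_pow, Finset.prod_mul_distrib, ← pow_mul, Finset.prod_pow_eq_pow_sum]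
  simp only [map_mul, map_prod, map_pow, RingHom.comp_apply, mul_comm (w _)]
  ring

lemma wφ_coeff (w : σ → ℕ) (g : MvPolynomial σ ℂ) (k : ℕ) (ν : σ →₀ ℕ) :
    MvPolynomial.coeff ν ((wφ w g).coeff k) = if k = ∑ p, ν p * w p then MvPolynomial.coeff ν g else 0 := by
  classical
  induction g using MvPolynomial.induction_on' with
  | monomial μ a =>
    rw [wφ_monomial, Polynomial.coeff_X_pow_mul', Polynomial.coeff_C, MvPolynomial.coeff_monomial]
    by_cases h : μ = ν
    · subst h
      by_cases hk : k = ∑ p, μ p * w p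
      · simp [hk]
      · rw [if_neg hk]
        by_cases h1 : ∑ p, μ p * w p ≤ k
        · rw [if_pos h1, if_neg (by omega)]; simp
        · rw [if_neg h1]; simp
    · rw [if_neg h, ite_self]
      split_ifs <;> simp [MvPolynomial.coeff_monomial, h]
  | add p q hp hq =>
    rw [map_add, Polynomial.coeff_add, MvPolynomial.coeff_add, hp, hq, MvPolynomial.coeff_add]
    split_ifs <;> simp

lemma wφ_inj (w : σ → ℕ) {g : MvPolynomial σ ℂ} (hg : g ≠ 0) : wφ w g ≠ 0 := by
  obtain ⟨ν, hν⟩ := MvPolynomial.ne_zero_iff.1 hg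
  intro h
  have := wφ_coeff w g (∑ p, ν p * w p) ν
  rw [h, if_pos rfl] at this
  simp at this
  exact hν this.symm

lemma wφ_deg (w : σ → ℕ) {g : MvPolynomial σ ℂ} {ν : σ →₀ ℕ} (hν : ν ∈ g.support) :
    (wφ w g).natTrailingDegree ≤ ∑ p, ν p * w p ∧ ∑ p, ν p * w p ≤ (wφ w g).natDegree := by
  have := wφ_coeff w g (∑ p, ν p * w p) ν
  rw [if_pos rfl] at this
  have hne : (wφ w g).coeff (∑ p, ν p * w p) ≠ 0 := by
    intro h
    rw [h] at this
    simp at this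
    exact (MvPolynomial.mem_support_iff.1 hν) this.symm
  exact ⟨Polynomial.natTrailingDegree_le_of_ne_zero hne, Polynomial.le_natDegree_of_ne_zero hne⟩

lemma wφ_factor (w : σ → ℕ) (f f0 f1 : MvPolynomial σ ℂ) (hf : f = f0 * f1) (hne : f ≠ 0) (a b : ℕ)
    (h : wφ w f * Polynomial.X ^ a = Polynomial.X ^ b * Polynomial.C f) :
    ∃ e0 e1 : ℕ, e0 + e1 + a = b ∧ (∀ ν ∈ f0.support, ∑ p, ν p * w p = e0) ∧
      ∀ ν ∈ f1.support, ∑ p, ν p * w p = e1 := by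
  have hf0 : f0 ≠ 0 := by rintro rfl; simp at hf; exact hne hf
  have hf1 : f1 ≠ 0 := by rintro rfl; simp at hf; exact hne hf
  have h0 := wφ_inj w hf0
  have h1 := wφ_inj w hf1
  have hC : (Polynomial.C f : Polynomial (MvPolynomial σ ℂ)) ≠ 0 := by simpa using hne
  have hX : ∀ k, (Polynomial.X ^ k : Polynomial (MvPolynomial σ ℂ)) ≠ 0 := fun k => pow_ne_zero _ Polynomial.X_ne_zero
  rw [show wφ w f = wφ w f0 * wφ w f1 by rw [hf, map_mul]] at h
  have t1 := congrArg Polynomial.natDegree h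
  have t2 := congrArg Polynomial.natTrailingDegree h
  rw [Polynomial.natDegree_mul (mul_ne_zero h0 h1) (hX a), Polynomial.natDegree_mul h0 h1,
    Polynomial.natDegree_mul (hX b) hC, Polynomial.natDegree_X_pow, Polynomial.natDegree_X_pow,
    Polynomial.natDegree_C] at t1
  rw [Polynomial.natTrailingDegree_mul (mul_ne_zero h0 h1) (hX a), Polynomial.natTrailingDegree_mul h0 h1,
    Polynomial.natTrailingDegree_mul (hX b) hC, Polynomial.natTrailingDegree_X_pow, Polynomial.natTrailingDegree_X_pow,
    Polynomial.natTrailingDegree_C] at t2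
  have u0 := Polynomial.natTrailingDegree_le_natDegree (wφ w f0)
  have u1 := Polynomial.natTrailingDegree_le_natDegree (wφ w f1)
  refine ⟨_, _, t1, ?_, ?_⟩
  · intro ν hν; have := wφ_deg w hν; omega
  · intro ν hν; have := wφ_deg w hν; omega

end wt

lemma det_scale {S S' : Type*} [CommRing S] [CommRing S'] (φ ψ : S →+* S') (m d : ℕ)
    (M : Matrix (Fin m) (Fin m) (Polynomial S)) (u v : Fin m → S')
    (hM : ∀ i j, (M i j).map φ * Polynomial.C (v j) = Polynomial.C (u i) * (M i j).map ψ) :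
    φ (M.det.coeff d) * ∏ j, v j = (∏ i, u i) * ψ (M.det.coeff d) := by
  have e1 : (M.map (Polynomial.mapRingHom φ)) * Matrix.diagonal (fun j => Polynomial.C (v j)) =
      Matrix.diagonal (fun i => Polynomial.C (u i)) * M.map (Polynomial.mapRingHom ψ) := by
    ext1 i j
    rw [Matrix.mul_diagonal, Matrix.diagonal_mul, Matrix.map_apply, Matrix.map_apply]
    exact hM i j
  have e2 := congrArg Matrix.det e1
  rw [Matrix.det_mul, Matrix.det_mul, Matrix.det_diagonal, Matrix.det_diagonal, ← map_prod, ← map_prod] at e2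
  have e3 := congrArg (fun p => Polynomial.coeff p d) e2
  simp only [Polynomial.coeff_mul_C, Polynomial.coeff_C_mul] at e3
  have k : ∀ ψ : S →+* S',
      (M.map (Polynomial.mapRingHom ψ)).det.coeff d = ψ (M.det.coeff d) := by
    intro ψ
    have := RingHom.map_det (Polynomial.mapRingHom ψ) M
    rw [RingHom.mapMatrix_apply] at this
    rw [← this, Polynomial.coe_mapRingHom, Polynomial.coeff_map]
  rw [k, k] at e3
  exact e3

lemma entry_scale (c : ℕ → ℕ) (n : ℕ) (H : Fin n → ℕ) (hH : Monotone H) (a b : Fin n) :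
    wφ (fun p : Pos c n => H p.1.1 - H p.1.2) (genX c n a b) * Polynomial.X ^ H b =
      Polynomial.X ^ H a * Polynomial.C (genX c n a b) := by
  simp only [genX, Matrix.of_apply]
  split_ifs with hp
  · have := hH hp.1.le
    rw [wφ, MvPolynomial.coe_eval₂Hom, MvPolynomial.eval₂_X]
    simp only
    have e : H a = (H a - H b) + H b := by omega
    conv_rhs => rw [e, pow_add]
    rw [mul_assoc, mul_assoc, mul_comm (Polynomial.C _)]
  · simp

lemma BSf_scale (c : ℕ → ℕ) (l n m : ℕ) (h : m + c 1 = n) (H : Fin n → ℕ) (hH : Monotone H) :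
    wφ (fun p : Pos c n => H p.1.1 - H p.1.2) (BSf c l n m h) * Polynomial.X ^ (∑ j : Fin m, H (colE h j))
      = Polynomial.X ^ (∑ i : Fin m, H (rowE h i)) * Polynomial.C (BSf c l n m h) := by
  rw [← Finset.prod_pow_eq_pow_sum, ← Finset.prod_pow_eq_pow_sum]
  refine det_scale (wφ (fun p : Pos c n => H p.1.1 - H p.1.2)) Polynomial.C m (dBS c l) (Mmat c n m h) _ _ ?_
  intro i j
  have hMij : Mmat c n m h i j = Polynomial.C (genX c n (rowE h i) (colE h j)) +
      if rowE h i = colE h j then Polynomial.X else 0 := rfl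
  rw [hMij, Polynomial.map_add, Polynomial.map_add, add_mul, mul_add, Polynomial.map_C, Polynomial.map_C,
    ← Polynomial.C_mul, ← Polynomial.C_mul, entry_scale c n H hH]
  congr 1
  split_ifs with hp
  · rw [hp, Polynomial.map_X, Polynomial.map_X, mul_comm]
  · rw [Polynomial.map_zero, Polynomial.map_zero, mul_zero, zero_mul]

def wtk {c : ℕ → ℕ} {n : ℕ} (μ : Pos c n →₀ ℕ) (k : Fin n) : ℤ :=
  ∑ p, (μ p : ℤ) * ((if p.1.1 = k then 1 else 0) - (if p.1.2 = k then 1 else 0))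

lemma BSf_weights (c : ℕ → ℕ) (l n m : ℕ) (h : m + c 1 = n) (f0 f1 : MvPolynomial (Pos c n) ℂ)
    (hf : BSf c l n m h = f0 * f1) (hne : BSf c l n m h ≠ 0) :
    ∃ w0 w1 : Fin n → ℤ, (∀ ν ∈ f0.support, ∀ k, wtk ν k = w0 k) ∧ (∀ ν ∈ f1.support, ∀ k, wtk ν k = w1 k) ∧
      ∀ k, w0 k + w1 k = (if c 1 ≤ k.1 then 1 else 0) - (if k.1 < m then 1 else 0) := by
  let Hs : Fin n → ℕ := fun v => 2 * v.1
  let Hk : Fin n → Fin n → ℕ := fun k v => 2 * v.1 + if v = k then 1 else 0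
  have hHs : Monotone Hs := by
    intro a b hab; have : a.1 ≤ b.1 := hab; simp only [Hs]; omega
  have hHk : ∀ k, Monotone (Hk k) := by
    intro k a b hab
    have h1 : a.1 ≤ b.1 := hab
    rcases hab.lt_or_eq with h2 | h2
    · have h3 : a.1 < b.1 := h2
      simp only [Hk]; split_ifs <;> omega
    · rw [h2]
  obtain ⟨e0, e1, hs, h0, h1⟩ := wφ_factor _ _ f0 f1 hf hne _ _ (BSf_scale c l n m h Hs hHs)
  have := fun k => wφ_factor _ _ f0 f1 hf hne _ _ (BSf_scale c l n m h (Hk k) (hHk k))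
  choose E0 E1 hS H0 H1 using this
  have key : ∀ (k : Fin n) (ν : Pos c n →₀ ℕ), wtk ν k = ((∑ p, ν p * (Hk k p.1.1 - Hk k p.1.2) : ℕ) : ℤ)
      - ((∑ p, ν p * (Hs p.1.1 - Hs p.1.2) : ℕ) : ℤ) := by
    intro k ν
    push_cast
    rw [wtk, ← Finset.sum_sub_distrib]
    refine Finset.sum_congr rfl fun p _ => ?_
    have a1 := hHs p.2.1.le
    have a2 := hHk k p.2.1.le
    rw [← mul_sub, Nat.cast_sub a1, Nat.cast_sub a2]
    simp only [Hk, Hs]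
    push_cast
    ring
  refine ⟨fun k => E0 k - e0, fun k => E1 k - e1, ?_, ?_, ?_⟩
  · intro ν hν k; rw [key, H0 k ν hν, h0 ν hν]
  · intro ν hν k; rw [key, H1 k ν hν, h1 ν hν]
  · intro k
    have s1 := hS k
    simp only [Hk, Finset.sum_add_distrib] at s1
    simp only [Hs] at hs
    have q1 : (∑ j : Fin m, if colE h j = k then 1 else 0) = if k.1 < m then 1 else 0 := by
      split_ifs with hk
      · rw [Finset.sum_eq_single ⟨k.1, hk⟩]
        · simp [colE]
        · intro b _ hb
          rw [if_neg]
          intro hh; apply hb; subst hh; simp [colE]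
        · simp
      · apply Finset.sum_eq_zero
        intro j _
        rw [if_neg]
        rintro rfl
        simp [colE] at hk
    have q2 : (∑ j : Fin m, if rowE h j = k then 1 else 0) = if c 1 ≤ k.1 then 1 else 0 := by
      split_ifs with hk
      · rw [Finset.sum_eq_single ⟨k.1 - c 1, by omega⟩]
        · rw [if_pos]; ext; simp [rowE]; omega
        · intro b _ hb
          rw [if_neg]
          intro hh; apply hb; subst hh; ext; simp [rowE]
        · simp
      · apply Finset.sum_eq_zero
        intro j _
        rw [if_neg]
        rintro rfl
        simp [rowE] at hk
    rw [q1, q2] at s1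
    beta_reduce
    split_ifs at s1 ⊢ <;> omega

structure GP {n : ℕ} (c : ℕ → ℕ) (l : ℕ) (β : Fin n → ℕ) (σ : Equiv.Perm (Fin n)) : Prop where
  g1 : ∀ v, β v = l → β (σ v) = 1
  g2 : ∀ v, β v ≠ l → σ v = v ∨ β v < β (σ v)
  g3 : (univ.filter (fun v => σ v = v)).card ≤ dBS c l

lemma BD.good_fpt {n m l : ℕ} {c : ℕ → ℕ} {β : Fin n → ℕ} (h : BD n m l c β)
    {σ : Equiv.Perm (Fin n)} (hσ : GP c l β σ) (A : Matrix (Fin n) (Fin n) ℂ)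
    (hA : ∀ a b, A a b = if a = σ b ∧ β b < β a then 1 else 0) : fpt c l h.hm A ≠ 0 := by
  classical
  have hl := h.hl
  have hN : Nil β A := by
    intro a b hab
    rw [hA, if_neg (by tauto)]
  let Y : Matrix (Fin n) (Fin n) ℂ := Matrix.of fun a b => if a = σ b then 1 else 0
  let u : Fin n → ℂ := fun b => if β b = l then 1 else 0
  let D : Matrix (Fin n) (Fin n) ℂ := Y * Matrix.diagonal u
  have hD : D.rank ≤ c 1 := by
    refine (Matrix.rank_mul_le_right _ _).trans ?_
    rw [Matrix.rank_diagonal, ← h.hcl, ← h.card l (by simp; omega), Fintype.card_subtype]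
    apply Finset.card_le_card
    intro v; simp [u]
  have hAD : ∀ a b, (A + D) a b = if a = σ b ∧ σ b ≠ b then 1 else 0 := by
    intro a b
    have e : D a b = (if a = σ b then 1 else 0) * (if β b = l then 1 else 0) := by
      simp only [D, Matrix.mul_diagonal]; rfl
    rw [Matrix.add_apply, hA, e]
    by_cases h1 : a = σ b
    · subst h1
      by_cases h2 : β b = l
      · have h3 := hσ.g1 b h2
        have h4 : σ b ≠ b := by intro h5; rw [h5] at h3; omega
        rw [if_neg (by omega)]; simp [h2, h4]
      · rcases hσ.g2 b h2 with h3 | h3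
        · simp [h3, h2]
        · have h4 : σ b ≠ b := by intro h5; rw [h5] at h3; omega
          simp [h3, h2, h4]
    · simp [h1]
  have hmul : ∀ v a, (Matrix.toLin' (A + D)) v (σ a) = if σ a ≠ a then v a else 0 := by
    intro v a
    rw [Matrix.toLin'_apply, Matrix.mulVec, dotProduct]
    simp only [hAD]
    rw [Finset.sum_eq_single a]
    · by_cases h1 : σ a = a <;> simp [h1]
    · intro b _ hb
      rw [if_neg, zero_mul]
      rintro ⟨h1, _⟩
      exact hb (σ.injective h1).symm
    · simp
  let P : (Fin n → ℂ) →ₗ[ℂ] ((univ.filter (fun v => σ v = v) : Finset (Fin n)) → ℂ) :=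
    LinearMap.funLeft ℂ ℂ (fun x => x.1)
  have hP : ∀ v, v ∈ LinearMap.ker P ↔ ∀ a, σ a = a → v a = 0 := by
    intro v
    rw [LinearMap.mem_ker]
    constructor
    · intro hv a ha
      exact congrFun hv ⟨a, by simp [ha]⟩
    · intro hv
      ext ⟨a, ha⟩
      exact hv a (by simpa using ha)
  refine h.lemN hN hD (LinearMap.ker P) ?_ ?_ ?_
  · rintro _ ⟨v, hv, rfl⟩
    rw [hP]
    intro a ha
    have := hmul v a
    rw [ha] at this
    rw [this]; simp
  · rw [eq_bot_iff]
    rintro v ⟨hv1, hv2⟩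
    rw [SetLike.mem_coe, hP] at hv1
    rw [Submodule.mem_bot]
    ext a
    by_cases ha : σ a = a
    · exact hv1 a ha
    · have := hmul v a
      rw [show (Matrix.toLin' (A + D)) v = 0 from hv2, if_pos ha] at this
      exact this.symm
  · have e1 := LinearMap.finrank_range_add_finrank_ker P
    have e2 := Submodule.finrank_le (LinearMap.range P)
    rw [Module.finrank_fintype_fun_eq_card] at e2
    rw [Module.finrank_fin_fun] at e1
    have := hσ.g3
    simp only [Fintype.card_coe] at e2
    omega

lemma wt_inv {c : ℕ → ℕ} {n : ℕ} (σ : Equiv.Perm (Fin n)) (g : MvPolynomial (Pos c n) ℂ)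
    (hg : MvPolynomial.eval (fun p : Pos c n => if p.1.1 = σ p.1.2 then 1 else 0) g ≠ 0)
    (w : Fin n → ℤ) (hw : ∀ ν ∈ g.support, ∀ k, wtk ν k = w k)
    (O : Finset (Fin n)) (hO : ∀ v, σ v ∈ O ↔ v ∈ O) : ∑ k ∈ O, w k = 0 := by
  rw [MvPolynomial.eval_eq'] at hg
  obtain ⟨μ, hμ, hne⟩ := Finset.exists_ne_zero_of_sum_ne_zero hg
  have hp := right_ne_zero_of_mul hne
  rw [Finset.prod_ne_zero_iff] at hp
  have hp' : ∀ p : Pos c n, μ p ≠ 0 → p.1.1 = σ p.1.2 := by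
    intro p hm
    by_contra hcon
    have := hp p (Finset.mem_univ p)
    rw [if_neg hcon, zero_pow hm] at this
    exact this rfl
  have : ∑ k ∈ O, w k = ∑ k ∈ O, wtk μ k := Finset.sum_congr rfl fun k _ => (hw μ hμ k).symm
  rw [this]
  simp only [wtk]
  rw [Finset.sum_comm]
  refine Finset.sum_eq_zero fun p _ => ?_
  rw [← Finset.mul_sum, Finset.sum_sub_distrib]
  simp only [Finset.sum_ite_eq]
  by_cases hm : μ p = 0
  · simp [hm]
  · rw [hp' p hm]
    simp only [hO, sub_self, mul_zero]

structure GR {n : ℕ} (c : ℕ → ℕ) (l : ℕ) (β : Fin n → ℕ) (ρ : Fin n → ℕ) : Prop where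
  r1 : ∀ a b, β a = β b → ρ a = ρ b → a = b
  r2 : ∀ j < c 1, ∃ a, β a = 1 ∧ ρ a = j
  r2l : ∀ j < c 1, ∃ a, β a = l ∧ ρ a = j
  r3 : (univ.filter (fun v => c 1 ≤ ρ v)).card ≤ dBS c l
  r4 : ∀ a, (β a = 1 ∨ β a = l) → ρ a < c 1

lemma BD.exists_perm {n m l : ℕ} {c : ℕ → ℕ} {β : Fin n → ℕ} (h : BD n m l c β)
    {ρ : Fin n → ℕ} (hρ : GR c l β ρ) : ∃ σ : Equiv.Perm (Fin n), GP c l β σ ∧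
      (∀ v, ρ (σ v) = ρ v) ∧ ∀ v, c 1 ≤ ρ v → σ v = v := by
  classical
  have hl := h.hl
  have ex : ∀ v, ∃ u, (c 1 ≤ ρ v → u = v) ∧ (ρ v < c 1 → ρ u = ρ v ∧ (β v = l → β u = 1) ∧
      (β v ≠ l → β v < β u ∧ ∀ x, ρ x = ρ v → β v < β x → β u ≤ β x)) := by
    intro v
    by_cases h1 : c 1 ≤ ρ v
    · exact ⟨v, fun _ => rfl, fun h2 => by omega⟩
    · by_cases h2 : β v = l
      · obtain ⟨a, ha, ha2⟩ := hρ.r2 (ρ v) (by omega)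
        exact ⟨a, fun h3 => absurd h3 h1, fun _ => ⟨ha2, fun _ => ha, fun h3 => absurd h2 h3⟩⟩
      · obtain ⟨b, hb, hb2⟩ := hρ.r2l (ρ v) (by omega)
        have hv := Finset.mem_Icc.1 (h.rng v)
        obtain ⟨u, hu, hmin⟩ := Finset.exists_min_image
          (univ.filter (fun x => ρ x = ρ v ∧ β v < β x)) β ⟨b, by simp [hb2]; omega⟩
        simp at hu hmin
        exact ⟨u, fun h3 => absurd h3 h1, fun _ => ⟨hu.1, fun h3 => absurd h3 h2,
          fun _ => ⟨hu.2, hmin⟩⟩⟩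
  choose f f1 f2 using ex
  have hρf : ∀ v, ρ (f v) = ρ v := by
    intro v
    by_cases h1 : c 1 ≤ ρ v
    · rw [f1 v h1]
    · exact (f2 v (by omega)).1
  have hinj : Function.Injective f := by
    intro u v huv
    have hrow : ρ u = ρ v := by rw [← hρf u, ← hρf v, huv]
    by_cases h1 : c 1 ≤ ρ u
    · rw [← f1 u h1, ← f1 v (by omega), huv]
    · obtain ⟨_, a1, a2⟩ := f2 u (by omega)
      obtain ⟨_, b1, b2⟩ := f2 v (by omega)
      have hu := Finset.mem_Icc.1 (h.rng u)
      have hv := Finset.mem_Icc.1 (h.rng v)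
      apply hρ.r1 _ _ _ hrow
      by_cases hul : β u = l
      · by_cases hvl : β v = l
        · rw [hul, hvl]
        · have e1 := a1 hul
          have e2 := (b2 hvl).1
          rw [← huv] at e2; omega
      · by_cases hvl : β v = l
        · have e1 := b1 hvl
          have e2 := (a2 hul).1
          rw [huv] at e2; omega
        · have e1 := a2 hul
          have e2 := b2 hvl
          rw [← huv] at e2
          have e3 := e1.2 v hrow.symm
          have e4 := e2.2 u hrow
          omega
  refine ⟨Equiv.ofBijective f (Finite.injective_iff_bijective.1 hinj), ⟨?_, ?_, ?_⟩, hρf, f1⟩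
  · intro v hv
    exact (f2 v (hρ.r4 v (Or.inr hv))).2.1 hv
  · intro v hv
    by_cases h1 : c 1 ≤ ρ v
    · exact Or.inl (f1 v h1)
    · exact Or.inr ((f2 v (by omega)).2.2 hv).1
  · refine (Finset.card_le_card ?_).trans hρ.r3
    intro v hv
    simp at hv ⊢
    by_contra hcon
    obtain ⟨_, a1, a2⟩ := f2 v (by omega)
    rw [hv] at a1 a2
    by_cases hvl : β v = l
    · have := a1 hvl; omega
    · have := (a2 hvl).1; omega

lemma GR.swap {n : ℕ} {c : ℕ → ℕ} {l : ℕ} {β ρ : Fin n → ℕ} (h : GR c l β ρ) (x y : Fin n)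
    (hxy : β x = β y) : GR c l β (fun v => ρ (Equiv.swap x y v)) := by
  have hβ : ∀ v, β (Equiv.swap x y v) = β v := by
    intro v
    rw [Equiv.swap_apply_def]
    split_ifs with h1 h2
    · rw [h1, hxy]
    · rw [h2, hxy]
    · rfl
  refine ⟨?_, ?_, ?_, ?_, ?_⟩
  · intro a b h1 h2
    exact (Equiv.swap x y).injective (h.r1 _ _ (by rw [hβ, hβ, h1]) h2)
  · intro j hj
    obtain ⟨a, h1, h2⟩ := h.r2 j hj
    exact ⟨Equiv.swap x y a, by rw [hβ, h1], by simpa using h2⟩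
  · intro j hj
    obtain ⟨a, h1, h2⟩ := h.r2l j hj
    exact ⟨Equiv.swap x y a, by rw [hβ, h1], by simpa using h2⟩
  · refine le_trans (le_of_eq ?_) h.r3
    apply Finset.card_bij (fun v _ => Equiv.swap x y v)
    · intro a ha; simpa using ha
    · intro a _ b _ h; exact (Equiv.swap x y).injective h
    · intro b hb; exact ⟨Equiv.swap x y b, by simpa using hb, by simp⟩
  · intro a ha
    exact h.r4 _ (by rw [hβ]; exact ha)

namespace BD
variable {n m l : ℕ} {c : ℕ → ℕ} {β : Fin n → ℕ} (h : BD n m l c β)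
include h

omit h in
def ρ0 (β : Fin n → ℕ) (v : Fin n) : ℕ := (univ.filter (fun u => u < v ∧ β u = β v)).card

lemma ρ0_lt (v : Fin n) : ρ0 β v < c (β v) := by
  rw [← h.card _ (h.rng v), ρ0]
  apply Finset.card_lt_card
  rw [Finset.ssubset_iff_of_subset]
  · exact ⟨v, by simp, by simp⟩
  · intro u; simp

omit h in
lemma ρ0_inj (a b : Fin n) (h1 : β a = β b) (h2 : ρ0 β a = ρ0 β b) : a = b := by
  have key : ∀ a b : Fin n, β a = β b → a < b → ρ0 β a < ρ0 β b := by
    intro a b h1 hab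
    apply Finset.card_lt_card
    rw [Finset.ssubset_iff_of_subset]
    · exact ⟨a, by simp [hab, h1], by simp⟩
    · intro u; simp; intro h3 h4; exact ⟨h3.trans hab, h4.trans h1⟩
  rcases lt_trichotomy a b with h3 | h3 | h3
  · have := key a b h1 h3; omega
  · exact h3
  · have := key b a h1.symm h3; omega

lemma ρ0_surj (i : ℕ) (hi : i ∈ Finset.Icc 1 l) (j : ℕ) (hj : j < c i) : ∃ a, β a = i ∧ ρ0 β a = j := by
  have : (univ.filter (fun a => β a = i)).image (ρ0 β) = Finset.range (c i) := by
    apply Finset.eq_of_subset_of_card_le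
    · intro x hx
      simp only [Finset.mem_image, Finset.mem_filter, Finset.mem_univ, true_and] at hx
      obtain ⟨a, rfl, rfl⟩ := hx
      exact Finset.mem_range.2 (h.ρ0_lt a)
    · rw [Finset.card_range, Finset.card_image_of_injOn, h.card i hi]
      intro a ha b hb hab
      simp at ha hb
      exact ρ0_inj a b (ha.trans hb.symm) hab
  have hj' : j ∈ (univ.filter (fun a => β a = i)).image (ρ0 β) := by rw [this]; simpa using hj
  simpa using hj'

lemma GR_base : GR c l β (ρ0 β) := by
  have hl := h.hl
  refine ⟨fun a b => ρ0_inj a b, fun j hj => h.ρ0_surj 1 (by simp; omega) j hj,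
    fun j hj => h.ρ0_surj l (by simp; omega) j (by rw [h.hcl]; exact hj), ?_, ?_⟩
  · rw [Finset.card_eq_sum_card_fiberwise (f := β) (t := Finset.Icc 1 l) (fun a _ => h.rng a), dBS]
    refine Finset.sum_le_sum fun i hi => ?_
    rw [← Nat.card_Ico]
    apply Finset.card_le_card_of_injOn (ρ0 β)
    · intro a ha
      simp at ha ⊢
      have := h.ρ0_lt a
      rw [ha.2] at this
      exact ⟨ha.1, this⟩
    · intro a ha b hb hab
      simp at ha hb
      exact ρ0_inj a b (ha.2.trans hb.2.symm) hab
  · intro a ha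
    have := h.ρ0_lt a
    rcases ha with h1 | h1 <;> rw [h1] at this
    · exact this
    · rwa [h.hcl] at this

lemma comb (hcne : ∀ j, 1 < j → j < l → c j ≠ c 1) (w : Fin n → ℤ)
    (HW : ∀ ρ, GR c l β ρ → (∀ j < c 1, ∑ v ∈ univ.filter (fun v => ρ v = j), w v = 0) ∧
      ∀ v, c 1 ≤ ρ v → w v = 0) :
    (∀ v, β v ≠ 1 → β v ≠ l → w v = 0) ∧ ∀ a b, β a = 1 → β b = l → w a + w b = 0 := by
  classical
  have hl := h.hl
  have hc1 := h.pos 1 (by simp; omega)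
  have G0 := h.GR_base
  have A1 : ∀ v, β v ≠ 1 → β v ≠ l → w v = 0 := by
    intro v h1 h2
    have hv := h.rng v
    have hv' := Finset.mem_Icc.1 hv
    have hne := hcne (β v) (by omega) (by omega)
    rcases lt_or_gt_of_ne hne with h3 | h3
    · -- small
      have G1 : GR c l β (Function.update (ρ0 β) v (c 1 - 1)) := by
        have hlt : ∀ a, β a = β v → ρ0 β a < c 1 - 1 := by
          intro a ha
          have := h.ρ0_lt a
          rw [ha] at this; omega
        refine ⟨?_, ?_, ?_, ?_, ?_⟩
        · intro a b hab hr
          rw [Function.update_apply, Function.update_apply] at hr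
          split_ifs at hr with e1 e2 e2
          · rw [e1, e2]
          · have := hlt b (by rw [← hab, e1]); omega
          · have := hlt a (by rw [hab, e2]); omega
          · exact ρ0_inj a b hab hr
        · intro j hj
          obtain ⟨a, ha, ha2⟩ := G0.r2 j hj
          refine ⟨a, ha, ?_⟩
          rw [Function.update_of_ne]
          · exact ha2
          · rintro rfl; exact h1 ha
        · intro j hj
          obtain ⟨a, ha, ha2⟩ := G0.r2l j hj
          refine ⟨a, ha, ?_⟩
          rw [Function.update_of_ne]
          · exact ha2
          · rintro rfl; exact h2 ha
        · refine (Finset.card_le_card ?_).trans G0.r3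
          intro a
          simp only [Finset.mem_filter, Finset.mem_univ, true_and, Function.update_apply]
          split_ifs
          · intro _; omega
          · exact id
        · intro a ha
          rw [Function.update_apply]
          split_ifs
          · omega
          · exact G0.r4 a ha
      have s0 := (HW _ G0).1 (c 1 - 1) (by omega)
      have s1 := (HW _ G1).1 (c 1 - 1) (by omega)
      have e : univ.filter (fun u => Function.update (ρ0 β) v (c 1 - 1) u = c 1 - 1) =
          insert v (univ.filter (fun u => ρ0 β u = c 1 - 1)) := by
        ext u
        simp only [Finset.mem_filter, Finset.mem_univ, true_and, Function.update_apply, Finset.mem_insert]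
        split_ifs with e1 <;> simp [e1]
      rw [e, Finset.sum_insert, s0, add_zero] at s1
      · exact s1
      · simp
        have := h.ρ0_lt v
        omega
    · -- big
      obtain ⟨u, hu, hu2⟩ := h.ρ0_surj (β v) hv (c 1) h3
      refine (HW _ (G0.swap v u hu.symm)).2 v ?_
      simp [hu2]
  refine ⟨A1, ?_⟩
  intro a b ha hb
  obtain ⟨a', ha', hr⟩ := G0.r2 (ρ0 β b) (G0.r4 b (Or.inr hb))
  have G1 := G0.swap a a' (ha.trans ha'.symm)
  have hab : a ≠ b := by rintro rfl; omega
  have ha'b : a' ≠ b := by rintro rfl; omega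
  have hρb : ρ0 β (Equiv.swap a a' b) = ρ0 β b := by
    rw [Equiv.swap_apply_of_ne_of_ne hab.symm ha'b.symm]
  have hρa : ρ0 β (Equiv.swap a a' a) = ρ0 β b := by
    rw [Equiv.swap_apply_left, hr]
  have s := (HW _ G1).1 (ρ0 β b) (G0.r4 b (Or.inr hb))
  rw [← Finset.sum_subset (s₁ := {a, b}), Finset.sum_pair hab] at s
  · exact s
  · intro x; simp
    rintro (rfl | rfl)
    · rw [Equiv.swap_apply_left, hr]
    · exact hρb
  · intro x hx hx2
    simp at hx hx2
    apply A1
    · intro h1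
      exact hx2.1 (G1.r1 _ _ (h1.trans ha.symm) (hx.trans hρa.symm))
    · intro h1
      exact hx2.2 (G1.r1 _ _ (h1.trans hb.symm) (hx.trans hρb.symm))

end BD

lemma wtk_zero {c : ℕ → ℕ} {n : ℕ} (μ : Pos c n →₀ ℕ) (h : ∀ k, wtk μ k = 0) : μ = 0 := by
  have e : ∑ k : Fin n, (k.1 : ℤ) * wtk μ k = ∑ p, (μ p : ℤ) * ((p.1.1.1 : ℤ) - p.1.2.1) := by
    simp only [wtk, Finset.mul_sum]
    rw [Finset.sum_comm]
    refine Finset.sum_congr rfl fun p _ => ?_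
    have : ∀ k : Fin n, (k.1 : ℤ) * ((μ p : ℤ) * ((if p.1.1 = k then 1 else 0) - (if p.1.2 = k then 1 else 0)))
        = (μ p : ℤ) * ((if p.1.1 = k then (k.1 : ℤ) else 0) - (if p.1.2 = k then (k.1 : ℤ) else 0)) := by
      intro k; split_ifs <;> ring
    simp only [this]
    rw [← Finset.mul_sum, Finset.sum_sub_distrib]
    simp
  simp only [h, mul_zero, Finset.sum_const_zero] at e
  have hp : ∀ p : Pos c n, (0 : ℤ) < (p.1.1.1 : ℤ) - p.1.2.1 := by
    intro p
    have : p.1.2.1 < p.1.1.1 := p.2.1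
    omega
  have := (Finset.sum_eq_zero_iff_of_nonneg (fun p _ => mul_nonneg (Int.natCast_nonneg (μ p)) (hp p).le)).1 e.symm
  ext p
  have h1 := this p (Finset.mem_univ p)
  rcases mul_eq_zero.1 h1 with h2 | h2
  · exact_mod_cast h2
  · have := hp p; omega

lemma unit_of_wt {c : ℕ → ℕ} {n : ℕ} (g : MvPolynomial (Pos c n) ℂ) (hg : g ≠ 0)
    (h : ∀ ν ∈ g.support, ∀ k, wtk ν k = 0) : IsUnit g := by
  have : g = MvPolynomial.C (MvPolynomial.coeff 0 g) := by
    ext ν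
    rw [MvPolynomial.coeff_C]
    split_ifs with h1
    · rw [h1]
    · by_contra hcon
      exact h1 (wtk_zero ν (h ν (MvPolynomial.mem_support_iff.2 hcon))).symm
  rw [this]
  apply IsUnit.map
  rw [isUnit_iff_ne_zero]
  intro h0
  rw [h0, map_zero] at this
  exact hg this

lemma BSf_irreducible (l : ℕ) (c : ℕ → ℕ) (n m : ℕ)
    (h : BD n m l c (fun a => blk c (a.1 + 1)))
    (hcne : ∀ j, 1 < j → j < l → c j ≠ c 1) : Irreducible (BSf c l n m h.hm) := by
  have hl := h.hl
  have hc1 := h.pos 1 (by simp; omega)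
  have ev : ∀ σ : Equiv.Perm (Fin n), GP c l (fun a => blk c (a.1 + 1)) σ →
      MvPolynomial.eval (fun p : Pos c n => if p.1.1 = σ p.1.2 then 1 else 0) (BSf c l n m h.hm) ≠ 0 := by
    intro σ hσ
    rw [eval_BSf]
    apply h.good_fpt hσ
    intro a b
    simp only [Xpt, Matrix.of_apply]
    by_cases h1 : blk c (b.1 + 1) < blk c (a.1 + 1)
    · have h2 : b < a := by
        by_contra hcon
        have := h.mono (not_lt.1 hcon)
        omega
      simp [h1, h2]
    · simp [h1]
  have hne : BSf c l n m h.hm ≠ 0 := by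
    obtain ⟨σ, hσ, _⟩ := h.exists_perm h.GR_base
    intro h0
    apply ev σ hσ
    rw [h0, map_zero]
  refine ⟨?_, ?_⟩
  · intro hu
    have h1 := hu.map (MvPolynomial.eval (0 : Pos c n → ℂ))
    rw [eval_BSf, h.fpt_zero_of_rank rfl rfl (Nil_Xpt c n 0)] at h1
    · exact not_isUnit_zero h1
    · have : Xpt c n 0 = 0 := by
        ext a b; simp [Xpt]
      rw [this, zero_pow (by omega), Matrix.rank_zero]
      omega
  · intro f0 f1 hf
    have hf0 : f0 ≠ 0 := by rintro rfl; rw [zero_mul] at hf; exact hne hf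
    have hf1 : f1 ≠ 0 := by rintro rfl; rw [mul_zero] at hf; exact hne hf
    obtain ⟨w0, w1, hw0, hw1, hw⟩ := BSf_weights c l n m h.hm f0 f1 hf hne
    have HW : ∀ (g g' : MvPolynomial (Pos c n) ℂ) (w : Fin n → ℤ), BSf c l n m h.hm = g * g' →
        (∀ ν ∈ g.support, ∀ k, wtk ν k = w k) →
        (∀ v, blk c (v.1 + 1) ≠ 1 → blk c (v.1 + 1) ≠ l → w v = 0) ∧
          ∀ a b : Fin n, blk c (a.1 + 1) = 1 → blk c (b.1 + 1) = l → w a + w b = 0 := by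
      intro g g' w hg hw
      refine h.comb hcne w ?_
      intro ρ hρ
      obtain ⟨σ, hσ, hρσ, hfix⟩ := h.exists_perm hρ
      have e := ev σ hσ
      rw [hg, map_mul] at e
      have key := wt_inv σ g (left_ne_zero_of_mul e) w hw
      constructor
      · intro j hj
        apply key
        intro v; simp [hρσ]
      · intro v hv
        have := key {v} ?_
        · simpa using this
        · intro u
          simp only [Finset.mem_singleton]
          constructor
          · intro h1
            rw [← hfix v hv] at h1
            exact σ.injective h1
          · rintro rfl; exact hfix _ hv
    have k0 := HW f0 f1 w0 hf hw0
    have k1 := HW f1 f0 w1 (by rw [hf, mul_comm]) hw1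
    have hm := h.hm
    have hcm := h.c1_le_m
    let a : Fin n := ⟨0, by omega⟩
    let b : Fin n := ⟨m, by omega⟩
    have ha : blk c (a.1 + 1) = 1 := (h.first a).2 hc1
    have hb : blk c (b.1 + 1) = l := (h.last b).2 le_rfl
    have nn : ∀ (g : MvPolynomial (Pos c n) ℂ) (w : Fin n → ℤ), g ≠ 0 →
        (∀ ν ∈ g.support, ∀ k, wtk ν k = w k) → 0 ≤ w b := by
      intro g w hg hw
      obtain ⟨ν, hν⟩ := MvPolynomial.support_nonempty.2 hg
      rw [← hw ν hν b, wtk]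
      refine Finset.sum_nonneg fun p _ => ?_
      have h2 : p.1.2 ≠ b := by
        intro h3
        have := p.2.2
        rw [h3, hb] at this
        have h4 := (Finset.mem_Icc.1 (h.rng p.1.1)).2
        omega
      rw [if_neg h2]
      split_ifs <;> simp
    have fin : ∀ (g g' : MvPolynomial (Pos c n) ℂ) (w : Fin n → ℤ), g ≠ 0 →
        BSf c l n m h.hm = g * g' →
        (∀ ν ∈ g.support, ∀ k, wtk ν k = w k) → w b = 0 → IsUnit g := by
      intro g g' w hg hgf hw hwb
      obtain ⟨q1, q2⟩ := HW g g' w hgf hw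
      apply unit_of_wt g hg
      intro ν hν k
      rw [hw ν hν k]
      by_cases hk1 : blk c (k.1 + 1) = 1
      · have := q2 k b hk1 hb; omega
      · by_cases hk2 : blk c (k.1 + 1) = l
        · have e1 := q2 a k ha hk2
          have e2 := q2 a b ha hb
          omega
        · exact q1 k hk1 hk2
    have e := hw b
    rw [if_pos (show c 1 ≤ b.1 from hcm), if_neg (show ¬ b.1 < m from lt_irrefl _)] at e
    have n0 := nn f0 w0 hf0 hw0
    have n1 := nn f1 w1 hf1 hw1
    by_cases hz : w0 b = 0
    · exact Or.inl (fin f0 f1 w0 hf0 hf hw0 hz)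
    · exact Or.inr (fin f1 f0 w1 hf1 (by rw [hf, mul_comm]) hw1 (by omega))

lemma exists_minor {n k : ℕ} (Y : Matrix (Fin n) (Fin n) ℂ) (hk : k ≤ Y.rank) :
    ∃ (A0 : Matrix (Fin k) (Fin n) ℂ) (B0 : Matrix (Fin n) (Fin k) ℂ), A0 * Y * B0 = 1 := by
  rw [rank_eq_range1] at hk
  obtain ⟨f, hf⟩ := exists_linearIndependent_of_le_finrank hk
  have hf' := hf.map' (LinearMap.range (Matrix.toLin' Y)).subtype (Submodule.ker_subtype _)
  choose x hx using fun i => (f i).2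
  let g : (Fin k → ℂ) →ₗ[ℂ] (Fin n → ℂ) := Fintype.linearCombination ℂ x
  have hg : (Matrix.toLin' Y) ∘ₗ g = Fintype.linearCombination ℂ
      ((LinearMap.range (Matrix.toLin' Y)).subtype ∘ f) := by
    ext1 i
    ext1
    simp [g, Fintype.linearCombination_apply_single, LinearMap.comp_apply, ← hx]
  have hinj : Function.Injective ((Matrix.toLin' Y) ∘ₗ g) := by
    rw [hg]
    exact linearIndependent_iff_injective_fintypeLinearCombination.1 hf'
  obtain ⟨p, hp⟩ := LinearMap.exists_leftInverse_of_injective _ (LinearMap.ker_eq_bot.2 hinj)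
  refine ⟨LinearMap.toMatrix' p, LinearMap.toMatrix' g, ?_⟩
  have := congrArg LinearMap.toMatrix' hp
  rw [LinearMap.toMatrix'_comp, LinearMap.toMatrix'_comp, LinearMap.toMatrix'_toLin',
    LinearMap.toMatrix'_id, ← Matrix.mul_assoc] at this
  exact this

lemma final_aux
    (l : ℕ) (hl : 2 ≤ l) (c : ℕ → ℕ) (hc : ∀ i ∈ Finset.Icc 1 l, 0 < c i)
    (hcl : c l = c 1) (n : ℕ) (hn : n = blkSum c l) (m : ℕ) (hm : m + c 1 = n)
    (hcne : ∀ j, 1 < j → j < l → c j ≠ c 1)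
    (r s : ℕ) (hr : r = ((Finset.Icc 1 l).filter fun i => c 1 < c i).card)
    (hs : s = (∑ i ∈ (Finset.Icc 1 l).filter (fun i => c i ≤ c 1), c i) - 2 * c 1)
    (g : MvPolynomial (Pos c n) ℂ) :
      (∀ ξ : Pos c n → ℂ, (Xpt c n ξ ^ (r + 1)).rank = s + c 1 - 1 →
          MvPolynomial.eval ξ g = 0)
        ↔ g ∈ Ideal.span {BSf c l n m hm} := by
  classical
  have h := BD_blk l hl c hc hcl n hn m hm
  have hc1 := hc 1 (by simp; omega)
  have hcm := h.c1_le_m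
  have irr := BSf_irreducible l c n m h hcne
  have P1 : ∀ ξ, (Xpt c n ξ ^ (r + 1)).rank < s + c 1 → MvPolynomial.eval ξ (BSf c l n m hm) = 0 := by
    intro ξ hξ
    rw [eval_BSf]
    exact h.fpt_zero_of_rank hr hs (Nil_Xpt c n ξ) hξ
  have P2 : ∀ ξ, MvPolynomial.eval ξ (BSf c l n m hm) = 0 → (Xpt c n ξ ^ (r + 1)).rank < s + c 1 := by
    intro ξ hξ
    by_contra hcon
    rw [eval_BSf] at hξ
    exact h.fpt_ne_zero_of_rank hr hs (Nil_Xpt c n ξ) (not_lt.1 hcon) hξ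
  constructor
  swap
  · intro hg ξ hξ
    obtain ⟨q, rfl⟩ := Ideal.mem_span_singleton.1 hg
    rw [map_mul, P1 ξ (by omega), zero_mul]
  · intro hV
    -- a point of the hypersurface
    obtain ⟨ξ1, hξ1⟩ : ∃ ξ1, MvPolynomial.eval ξ1 (BSf c l n m hm) ≠ 0 := by
      by_contra hcon
      push Not at hcon
      exact irr.ne_zero (MvPolynomial.funext fun x => by rw [hcon x, map_zero])
    have hrk1 : s + c 1 ≤ (Xpt c n ξ1 ^ (r + 1)).rank := by
      by_contra hcon
      exact hξ1 (P1 ξ1 (not_le.1 hcon))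
    let v0 : Fin n := ⟨0, by omega⟩
    let ξ0 : Pos c n → ℂ := fun p => if p.1.2 = v0 then 0 else ξ1 p
    let Q : Matrix (Fin n) (Fin n) ℂ := Matrix.diagonal (fun v => if v = v0 then 0 else 1)
    have hX0 : Xpt c n ξ0 = Xpt c n ξ1 * Q := by
      ext a b
      simp only [Q, Matrix.mul_diagonal, Xpt, Matrix.of_apply, ξ0]
      by_cases hb : b = v0 <;> simp [hb]
    have hQX : Q * Xpt c n ξ1 = Xpt c n ξ1 := by
      ext a b
      simp only [Q, Matrix.diagonal_mul, Xpt, Matrix.of_apply]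
      by_cases ha : a = v0
      · rw [dif_neg, mul_zero]
        rintro ⟨h1, _⟩
        rw [ha] at h1
        exact absurd (show b.1 < 0 from h1) (Nat.not_lt_zero _)
      · simp [ha]
    have hpow : ∀ k, Xpt c n ξ0 ^ (k + 1) = Xpt c n ξ1 ^ (k + 1) * Q := by
      intro k
      induction k with
      | zero => simpa using hX0
      | succ k ih =>
        rw [pow_succ, ih, hX0, pow_succ (Xpt c n ξ1) (k + 1), Matrix.mul_assoc, ← Matrix.mul_assoc Q, hQX,
          Matrix.mul_assoc]
    have hrk0 : s + c 1 - 1 ≤ (Xpt c n ξ0 ^ (r + 1)).rank := by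
      have e1 : Xpt c n ξ1 ^ (r + 1) = Xpt c n ξ0 ^ (r + 1) + Xpt c n ξ1 ^ (r + 1) * (1 - Q) := by
        rw [hpow, Matrix.mul_sub, Matrix.mul_one]; abel
      have e2 := rank_add_le' (Xpt c n ξ0 ^ (r + 1)) (Xpt c n ξ1 ^ (r + 1) * (1 - Q))
      rw [← e1] at e2
      have e3 : (1 - Q).rank ≤ 1 := by
        have : (1 - Q) = Matrix.diagonal (fun v => if v = v0 then 1 else 0) := by
          rw [← Matrix.diagonal_one, Matrix.diagonal_sub]
          congr 1; ext v; split_ifs <;> simp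
        rw [this, Matrix.rank_diagonal, Fintype.card_subtype]
        have : (univ.filter (fun v : Fin n => (if v = v0 then (1 : ℂ) else 0) ≠ 0)) = {v0} := by
          ext v; simp
        rw [this, Finset.card_singleton]
      have e4 := Matrix.rank_mul_le_right (Xpt c n ξ1 ^ (r + 1)) (1 - Q)
      omega
    have hf0 : MvPolynomial.eval ξ0 (BSf c l n m hm) = 0 := by
      rw [eval_BSf, fpt, Matrix.det_eq_zero_of_column_eq_zero (⟨0, by omega⟩ : Fin m)]
      · simp
      · intro i
        have hcol : colE hm (⟨0, by omega⟩ : Fin m) = v0 := rfl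
        have hrow : rowE hm i ≠ v0 := by
          intro h1
          have := congrArg Fin.val h1
          simp [rowE, v0] at this
          omega
        rw [Matrix.submatrix_apply, hcol, Pm, Matrix.of_apply, if_neg hrow, hX0]
        simp [Q, Matrix.mul_diagonal]
    obtain ⟨A0, B0, hAB⟩ := exists_minor _ hrk0
    let q : MvPolynomial (Pos c n) ℂ :=
      Matrix.det ((A0.map (⇑(MvPolynomial.C : ℂ →+* MvPolynomial (Pos c n) ℂ)) :
          Matrix (Fin (s + c 1 - 1)) (Fin n) (MvPolynomial (Pos c n) ℂ)) * (genX c n) ^ (r + 1) *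
        (B0.map (⇑(MvPolynomial.C : ℂ →+* MvPolynomial (Pos c n) ℂ)) :
          Matrix (Fin n) (Fin (s + c 1 - 1)) (MvPolynomial (Pos c n) ℂ)))
    have hq : ∀ ξ, MvPolynomial.eval ξ q = (A0 * Xpt c n ξ ^ (r + 1) * B0).det := by
      intro ξ
      have hC : ∀ {a b : ℕ} (N : Matrix (Fin a) (Fin b) ℂ),
          (N.map (MvPolynomial.C : ℂ →+* MvPolynomial (Pos c n) ℂ)).map (MvPolynomial.eval ξ) = N := by
        intro a b N
        ext i j; simp
      simp only [q]
      rw [RingHom.map_det, RingHom.mapMatrix_apply, Matrix.map_mul, Matrix.map_mul, hC, hC,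
        ← RingHom.mapMatrix_apply (MvPolynomial.eval ξ) (genX c n ^ (r + 1)), map_pow,
        RingHom.mapMatrix_apply, eval_genX]
    have hprime : Prime (BSf c l n m hm) := irr.prime
    have : (Ideal.span {BSf c l n m hm}).IsPrime :=
      (Ideal.span_singleton_prime hprime.ne_zero).2 hprime
    have null := MvPolynomial.IsPrime.vanishingIdeal_zeroLocus (K := ℂ) (Ideal.span {BSf c l n m hm})
    have hgq : g * q ∈ Ideal.span {BSf c l n m hm} := by
      rw [← null, MvPolynomial.mem_vanishingIdeal_iff]
      intro ξ hξ
      have h1 := hξ _ (Ideal.mem_span_singleton_self _)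
      rw [MvPolynomial.aeval_eq_eval] at h1
      rw [MvPolynomial.aeval_eq_eval]
      rw [map_mul]
      have h2 := P2 ξ h1
      by_cases h3 : (Xpt c n ξ ^ (r + 1)).rank = s + c 1 - 1
      · rw [hV ξ h3, zero_mul]
      · have : MvPolynomial.eval ξ q = 0 := by
          rw [hq]
          by_contra hne
          have hu : IsUnit (A0 * Xpt c n ξ ^ (r + 1) * B0) := by
            rw [Matrix.isUnit_iff_isUnit_det]; exact isUnit_iff_ne_zero.2 hne
          have e1 := Matrix.rank_of_isUnit _ hu
          rw [Fintype.card_fin] at e1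
          have e2 := Matrix.rank_mul_le_left (A0 * Xpt c n ξ ^ (r + 1)) B0
          have e3 := Matrix.rank_mul_le_right A0 (Xpt c n ξ ^ (r + 1))
          omega
        rw [this, mul_zero]
    rcases Ideal.IsPrime.mem_or_mem ‹_› hgq with h1 | h1
    · exact h1
    · exfalso
      obtain ⟨u, hu⟩ := Ideal.mem_span_singleton.1 h1
      have e1 := hq ξ0
      rw [hAB, Matrix.det_one, hu, map_mul, hf0, zero_mul] at e1
      exact zero_ne_one e1

/-- **Benlolo–Sanderson conjecture** (Theorem 2.19 (i) / 3.16):  the vanishing ideal of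
`V = {ξ : P → ℂ | rank (X(ξ)^(r+1)) = s + c - 1}` is the principal ideal generated by the
Benlolo–Sanderson element `f`. -/
theorem vanishing_ideal_of_hypersurface_orbital_variety_eq_span_BS
    (l : ℕ) (hl : 2 ≤ l) (c : ℕ → ℕ) (hc : ∀ i ∈ Finset.Icc 1 l, 0 < c i)
    (hcl : c l = c 1) (n : ℕ) (hn : n = blkSum c l) (m : ℕ) (hm : m + c 1 = n)
    (hcne : ∀ j, 1 < j → j < l → c j ≠ c 1)
    (r s : ℕ) (hr : r = ((Finset.Icc 1 l).filter fun i => c 1 < c i).card)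
    (hs : s = (∑ i ∈ (Finset.Icc 1 l).filter (fun i => c i ≤ c 1), c i) - 2 * c 1) :
    ∀ g : MvPolynomial (Pos c n) ℂ,
      (∀ ξ : Pos c n → ℂ, (Xpt c n ξ ^ (r + 1)).rank = s + c 1 - 1 →
          MvPolynomial.eval ξ g = 0)
        ↔ g ∈ Ideal.span {BSf c l n m hm} := by
  intro g
  exact final_aux l hl c hc hcl n hn m hm hcne r s hr hs g

end
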